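/- There exist polynomials I_8, I_16, I_24, I_32, I_40 with integer coefficients in the variables J_2,...,J_7, which are homogeneous of degrees 8, 16, 24, 32, 40 respectively when J_i is assigned weight i, such that for every field k with char k ∉ {2,3,5,7} and every binary octavic f over k the following identity holds: 2^2·3^{20}·5^{12}·J_8(f)^5 + 2^2·3^{16}·5^9·I_8(f)·J_8(f)^4 + 2^3·3^{12}·5^6·I_16(f)·J_8(f)^3 + 2·3^8·5^6·I_24(f)·J_8(f)^2 + 2^2·3^4·5^2·I_32(f)·J_8(f) + I_40(f) = 0, where I_{8j}(f) denotes the evaluation of I_{8j} at (J_2(f),...,J_7(f)). Moreover one may take I_8 = −2^7·7^5·J_2^4 + 2^2·3·5^3·7^3·J_2^2·J_4 + 2^6·3^3·7^2·J_2·J_3^2 + 2^3·5^4·7^2·J_2·J_6 − 2^2·3^5·5^2·7·J_3·J_5 − 3^3·5^4·17·J_4^2. -/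

import Mathlib

noncomputable section

open MvPolynomial


variable {k : Type*} [Field k]

/-- char k not in {2,3,5,7} -/
def CharOK (k : Type*) [Field k] : Prop :=
  ringChar k ≠ 2 ∧ ringChar k ≠ 3 ∧ ringChar k ≠ 5 ∧ ringChar k ≠ 7

/-- the r-th transvectant of binary forms f, g of degrees n and m -/
def transvectant (n m r : ℕ) (f g : MvPolynomial (Fin 2) k) : MvPolynomial (Fin 2) k :=
  C ((((m - r).factorial * (n - r).factorial : ℕ) : k) /
      ((n.factorial * m.factorial : ℕ) : k)) *
    ∑ j ∈ Finset.range (r + 1),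
      C ((-1 : k) ^ j * (r.choose j : k)) *
        ((fun p => pderiv (0 : Fin 2) p)^[r - j] ((fun p => pderiv (1 : Fin 2) p)^[j] f)) *
        ((fun p => pderiv (0 : Fin 2) p)^[j] ((fun p => pderiv (1 : Fin 2) p)^[r - j] g))

/-- the binary octavic with coefficient vector a -/
def octForm (a : Fin 9 → k) : MvPolynomial (Fin 2) k :=
  ∑ i : Fin 9, C (a i) * X 0 ^ (i : ℕ) * X 1 ^ (8 - (i : ℕ))

def covg (a : Fin 9 → k) := transvectant 8 8 4 (octForm a) (octForm a)
def covk (a : Fin 9 → k) := transvectant 8 8 6 (octForm a) (octForm a)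
def covh (a : Fin 9 → k) := transvectant 4 4 2 (covk a) (covk a)
def covm (a : Fin 9 → k) := transvectant 8 4 4 (octForm a) (covk a)
def covn (a : Fin 9 → k) := transvectant 8 4 4 (octForm a) (covh a)
def covp (a : Fin 9 → k) := transvectant 8 4 4 (covg a) (covk a)
def covq (a : Fin 9 → k) := transvectant 8 4 4 (covg a) (covh a)

def J2 (a : Fin 9 → k) : k :=
  (2 ^ 2 * 5 * 7 : k) * constantCoeff (transvectant 8 8 8 (octForm a) (octForm a))
def J3 (a : Fin 9 → k) : k :=
  ((2 ^ 4 * 5 ^ 2 * 7 ^ 3 : k) / 3) * constantCoeff (transvectant 8 8 8 (octForm a) (covg a))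
def J4 (a : Fin 9 → k) : k :=
  (2 ^ 9 * 3 * 7 ^ 4 : k) * constantCoeff (transvectant 4 4 4 (covk a) (covk a))
def J5 (a : Fin 9 → k) : k :=
  (2 ^ 9 * 5 * 7 ^ 5 : k) * constantCoeff (transvectant 4 4 4 (covm a) (covk a))
def J6 (a : Fin 9 → k) : k :=
  (2 ^ 14 * 3 ^ 2 * 7 ^ 6 : k) * constantCoeff (transvectant 4 4 4 (covk a) (covh a))
def J7 (a : Fin 9 → k) : k :=
  (2 ^ 14 * 3 * 5 * 7 ^ 7 : k) * constantCoeff (transvectant 4 4 4 (covm a) (covh a))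
def J8 (a : Fin 9 → k) : k :=
  (2 ^ 17 * 3 * 5 ^ 2 * 7 ^ 9 : k) * constantCoeff (transvectant 4 4 4 (covp a) (covh a))
def J9 (a : Fin 9 → k) : k :=
  (2 ^ 19 * 3 ^ 2 * 5 * 7 ^ 9 : k) * constantCoeff (transvectant 4 4 4 (covn a) (covh a))
def J10 (a : Fin 9 → k) : k :=
  (2 ^ 22 * 3 ^ 2 * 5 ^ 2 * 7 ^ 11 : k) * constantCoeff (transvectant 4 4 4 (covq a) (covh a))

def Jinv : ℕ → (Fin 9 → k) → k
  | 2 => J2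
  | 3 => J3
  | 4 => J4
  | 5 => J5
  | 6 => J6
  | 7 => J7
  | 8 => J8
  | 9 => J9
  | 10 => J10
  | _ => fun _ => 0

/-- action of a 2x2 matrix on binary forms by substitution (X,Y) ↦ (aX+bY, cX+dY) -/
def substForm (g : Matrix (Fin 2) (Fin 2) k) (p : MvPolynomial (Fin 2) k) :
    MvPolynomial (Fin 2) k :=
  aeval (fun i : Fin 2 => C (g i 0) * X 0 + C (g i 1) * X 1) p

/-- coefficients of the transformed octavic -/
def octAct (g : Matrix (Fin 2) (Fin 2) k) (a : Fin 9 → k) : Fin 9 → k := fun i =>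
  coeff (Finsupp.single (0 : Fin 2) (i : ℕ) + Finsupp.single (1 : Fin 2) (8 - (i : ℕ)))
    (substForm g (octForm a))

set_option linter.all false

/-! ### Bilinear operations given by integer tables -/

/-- bilinear expression attached to a table -/
def bil {R : Type*} [CommSemiring R] (w : ℤ → R) (L : List (ℤ × ℕ × ℕ)) (f g : ℕ → R) : R :=
  (L.map fun t => w t.1 * f t.2.1 * g t.2.2).sum

def bop {R : Type*} [CommSemiring R] (w : ℤ → R) (LL : List (List (ℤ × ℕ × ℕ))) (f g : ℕ → R) :
    ℕ → R := fun o => bil w (LL.getD o []) f g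


def tG : List (List (ℤ × ℕ × ℕ)) := [[(56, 0, 4), (-35, 1, 3), (15, 2, 2)],
  [(280, 0, 5), (-84, 1, 4), (20, 2, 3)],
  [(840, 0, 6), (-70, 1, 5), (-44, 2, 4), (30, 3, 3)],
  [(1960, 0, 7), (140, 1, 6), (-120, 2, 5), (36, 3, 4)],
  [(3920, 0, 8), (735, 1, 7), (-110, 2, 6), (-45, 3, 5), (36, 4, 4)],
  [(1960, 1, 8), (140, 2, 7), (-120, 3, 6), (36, 4, 5)],
  [(840, 2, 8), (-70, 3, 7), (-44, 4, 6), (30, 5, 5)],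
  [(280, 3, 8), (-84, 4, 7), (20, 5, 6)],
  [(56, 4, 8), (-35, 5, 7), (15, 6, 6)]]
def tK : List (List (ℤ × ℕ × ℕ)) := [[(56, 0, 6), (-21, 1, 5), (12, 2, 4), (-5, 3, 3)],
  [(392, 0, 7), (-70, 1, 6), (18, 2, 5), (-4, 3, 4)],
  [(1568, 0, 8), (-49, 1, 7), (-16, 2, 6), (17, 3, 5), (-8, 4, 4)],
  [(392, 1, 8), (-70, 2, 7), (18, 3, 6), (-4, 4, 5)],
  [(56, 2, 8), (-21, 3, 7), (12, 4, 6), (-5, 5, 5)]]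
def tH : List (List (ℤ × ℕ × ℕ)) := [[(8, 0, 2), (-3, 1, 1)],
  [(24, 0, 3), (-4, 1, 2)],
  [(48, 0, 4), (6, 1, 3), (-4, 2, 2)],
  [(24, 1, 4), (-4, 2, 3)],
  [(8, 2, 4), (-3, 3, 3)]]
def tM : List (List (ℤ × ℕ × ℕ)) := [[(280, 0, 4), (-35, 1, 3), (10, 2, 2), (-5, 3, 1), (4, 4, 0)],
  [(140, 1, 4), (-40, 2, 3), (20, 3, 2), (-16, 4, 1), (20, 5, 0)],
  [(60, 2, 4), (-30, 3, 3), (24, 4, 2), (-30, 5, 1), (60, 6, 0)],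
  [(20, 3, 4), (-16, 4, 3), (20, 5, 2), (-40, 6, 1), (140, 7, 0)],
  [(4, 4, 4), (-5, 5, 3), (10, 6, 2), (-35, 7, 1), (280, 8, 0)]]
def tQ : List (List (ℤ × ℕ × ℕ)) := [[(12, 0, 4), (-3, 1, 3), (2, 2, 2), (-3, 3, 1), (12, 4, 0)]]
def tT : List (List (ℤ × ℕ × ℕ)) := [[(280, 0, 8), (-35, 1, 7), (10, 2, 6), (-5, 3, 5), (4, 4, 4), (-5, 5, 3), (10, 6, 2), (-35, 7, 1), (280, 8, 0)]]


/-! ### Binary forms and transvectants in coordinates -/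

def bform (n : ℕ) (c : ℕ → k) : MvPolynomial (Fin 2) k :=
  ∑ i ∈ Finset.range (n + 1), C (c i) * X 0 ^ i * X 1 ^ (n - i)

lemma bform_congr {n : ℕ} {c d : ℕ → k} (h : ∀ i ≤ n, c i = d i) : bform n c = bform n d := by
  unfold bform
  refine Finset.sum_congr rfl fun i hi => ?_
  rw [h i (by simpa [Nat.lt_succ_iff] using hi)]

lemma pd0_bform (n : ℕ) (c : ℕ → k) :
    pderiv (0 : Fin 2) (bform (n + 1) c) = bform n (fun i => ((i + 1 : ℕ) : k) * c (i + 1)) := by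
  unfold bform
  rw [Finset.sum_range_succ', map_add, map_sum]
  have h0 : pderiv (0 : Fin 2) (C (c 0) * X 0 ^ 0 * X 1 ^ (n + 1 - 0) : MvPolynomial (Fin 2) k) = 0 := by
    simp [Derivation.leibniz, Derivation.leibniz_pow, pderiv_X]
  rw [h0, add_zero]
  refine Finset.sum_congr rfl fun i hi => ?_
  have : n + 1 - (i + 1) = n - i := by omega
  rw [this]
  simp [Derivation.leibniz, Derivation.leibniz_pow, pderiv_X]
  ring

lemma pd1_bform (n : ℕ) (c : ℕ → k) :
    pderiv (1 : Fin 2) (bform (n + 1) c) = bform n (fun i => ((n + 1 - i : ℕ) : k) * c i) := by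
  unfold bform
  rw [Finset.sum_range_succ, map_add, map_sum]
  have h0 : pderiv (1 : Fin 2) (C (c (n+1)) * X 0 ^ (n+1) * X 1 ^ (n + 1 - (n+1)) : MvPolynomial (Fin 2) k) = 0 := by
    simp [Derivation.leibniz, Derivation.leibniz_pow, pderiv_X]
  rw [h0, add_zero]
  refine Finset.sum_congr rfl fun i hi => ?_
  have hi' : i ≤ n := by simpa [Nat.lt_succ_iff] using hi
  obtain ⟨j, rfl⟩ := Nat.exists_eq_add_of_le hi'
  have e1 : i + j + 1 - i = j + 1 := by omega
  have e2 : i + j - i = j := by omega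
  beta_reduce
  rw [e1, e2]
  simp [Derivation.leibniz, Derivation.leibniz_pow, pderiv_X]
  ring

lemma pd0_iter (s n : ℕ) (c : ℕ → k) :
    (fun p => pderiv (0 : Fin 2) p)^[s] (bform (n + s) c) =
      bform n (fun i => ((i + s).descFactorial s : k) * c (i + s)) := by
  induction s generalizing c with
  | zero => simp
  | succ s ih =>
    rw [Function.iterate_succ, Function.comp_apply, ← add_assoc, pd0_bform, ih]
    refine bform_congr fun i _ => ?_
    rw [← add_assoc, Nat.succ_descFactorial_succ]
    push_cast
    ring

lemma pd1_iter (s n : ℕ) (c : ℕ → k) :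
    (fun p => pderiv (1 : Fin 2) p)^[s] (bform (n + s) c) =
      bform n (fun i => ((n + s - i).descFactorial s : k) * c i) := by
  induction s generalizing c with
  | zero => simp
  | succ s ih =>
    rw [Function.iterate_succ, Function.comp_apply, ← add_assoc, pd1_bform, ih]
    refine bform_congr fun i hi => ?_
    have e' : n + s + 1 - i = (n + s - i) + 1 := by omega
    rw [e', Nat.succ_descFactorial_succ]
    push_cast
    ring

lemma bform_mul (n m : ℕ) (c d : ℕ → k) :
    bform n c * bform m d = bform (n + m) (fun o => ∑ i ∈ Finset.range (n + 1),
      if i ≤ o ∧ o - i ≤ m then c i * d (o - i) else 0) := by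
  unfold bform
  rw [Finset.sum_mul]
  simp_rw [map_sum, Finset.sum_mul]
  rw [Finset.sum_comm]
  refine Finset.sum_congr rfl fun i hi => ?_
  have hi' : i ≤ n := by simpa [Nat.lt_succ_iff] using hi
  rw [Finset.mul_sum]
  refine Finset.sum_bij_ne_zero (fun j _ _ => i + j) ?_ ?_ ?_ ?_
  · intro j hj _
    simp only [Finset.mem_range] at *
    omega
  · intro j _ _ j' _ _ h
    omega
  · intro o ho hne
    simp only [Finset.mem_range] at *
    split_ifs at hne with h
    · refine ⟨o - i, by omega, ?_, by omega⟩
      intro h0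
      apply hne
      have e1 : X 0 ^ o = (X 0 ^ i * X 0 ^ (o - i) : MvPolynomial (Fin 2) k) := by
        rw [← pow_add]; congr 1; omega
      have e2 : X 1 ^ (n + m - o) = (X 1 ^ (n - i) * X 1 ^ (m - (o - i)) : MvPolynomial (Fin 2) k) := by
        rw [← pow_add]; congr 1; omega
      rw [e1, e2, C_mul, ← h0]
      ring
    · simp at hne
  · intro j hj _
    simp only [Finset.mem_range] at *
    have h : i ≤ i + j ∧ i + j - i ≤ m := by omega
    rw [if_pos h]
    have e0 : i + j - i = j := by omega
    have e1 : n + m - (i + j) = (n - i) + (m - j) := by omega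
    rw [e0, e1, C_mul, pow_add, pow_add]
    ring

lemma bform_sum {ι : Type*} (s : Finset ι) (n : ℕ) (c : ι → ℕ → k) :
    ∑ j ∈ s, bform n (c j) = bform n (fun o => ∑ j ∈ s, c j o) := by
  unfold bform
  rw [Finset.sum_comm]
  refine Finset.sum_congr rfl fun i _ => ?_
  rw [map_sum, Finset.sum_mul, Finset.sum_mul]

lemma C_mul_bform (n : ℕ) (s : k) (c : ℕ → k) :
    C s * bform n c = bform n (fun o => s * c o) := by
  unfold bform
  rw [Finset.mul_sum]
  refine Finset.sum_congr rfl fun i _ => ?_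
  rw [C_mul]; ring

def trc (n m r : ℕ) (c d : ℕ → k) : ℕ → k := fun o =>
  ∑ j ∈ Finset.range (r + 1), (-1 : k) ^ j * (r.choose j : k) *
    ∑ i ∈ Finset.range (n + 1), if i ≤ o ∧ o - i ≤ m then
      (((i + (r - j)).descFactorial (r - j) : k) *
        (((n + r - (i + (r - j))).descFactorial j : k) * c (i + (r - j)))) *
      (((o - i + j).descFactorial j : k) *
        (((m + r - (o - i + j)).descFactorial (r - j) : k) * d (o - i + j))) else 0

lemma transvectant_bform (n m r : ℕ) (c d : ℕ → k) :
    transvectant (n + r) (m + r) r (bform (n + r) c) (bform (m + r) d) =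
      bform (n + m) (fun o => ((m.factorial * n.factorial : ℕ) : k) /
        (((n + r).factorial * (m + r).factorial : ℕ) : k) * trc n m r c d o) := by
  unfold transvectant
  simp only [Nat.add_sub_cancel]
  rw [← C_mul_bform]
  congr 1
  unfold trc
  rw [← bform_sum]
  refine Finset.sum_congr rfl fun j hj => ?_
  have hj' : j ≤ r := by simpa [Nat.lt_succ_iff] using hj
  have e1 : n + r = (n + (r - j)) + j := by omega
  have e2 : m + r = (m + j) + (r - j) := by omega
  conv_lhs => rw [e1, e2]
  rw [pd1_iter, pd1_iter, pd0_iter, pd0_iter, mul_assoc, bform_mul, C_mul_bform, ← e1, ← e2]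

lemma constantCoeff_bform (c : ℕ → k) : constantCoeff (bform 0 c) = c 0 := by
  simp [bform]

lemma octForm_eq (a : Fin 9 → k) :
    octForm a = bform 8 (fun i => if h : i < 9 then a ⟨i, h⟩ else 0) := by
  unfold octForm bform
  rw [Finset.sum_range]
  refine Finset.sum_congr rfl fun i _ => ?_
  simp



/-! ### The transvectants needed here -/

lemma sum_list_range {R : Type*} [AddCommMonoid R] (n : ℕ) (f : ℕ → R) :
    ((List.range n).map f).sum = ∑ i ∈ Finset.range n, f i := by
  induction n with
  | zero => simp
  | succ n ih => rw [List.range_succ, List.map_append, List.sum_append, ih, Finset.sum_range_succ]; simp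

lemma bil_append {R : Type*} [CommSemiring R] (w : ℤ → R) (L L' : List (ℤ × ℕ × ℕ)) (f g : ℕ → R) :
    bil w (L ++ L') f g = bil w L f g + bil w L' f g := by
  simp [bil]

lemma bil_flatMap_range {R : Type*} [CommSemiring R] (w : ℤ → R) (n : ℕ)
    (L : ℕ → List (ℤ × ℕ × ℕ)) (f g : ℕ → R) :
    bil w ((List.range n).flatMap L) f g = ∑ i ∈ Finset.range n, bil w (L i) f g := by
  induction n with
  | zero => simp [bil]
  | succ n ih => rw [List.range_succ, List.flatMap_append, bil_append, ih, Finset.sum_range_succ]; simp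

abbrev ic (R : Type*) [Ring R] : ℤ → R := Int.cast

/-- the table of the unnormalized transvectant -/
def rawL (n m r o : ℕ) : List (ℤ × ℕ × ℕ) :=
  (List.range (r + 1)).flatMap fun j => (List.range (n + 1)).map fun i =>
    if i ≤ o ∧ o - i ≤ m then
      ((-1) ^ j * ((r.choose j * ((i + (r - j)).descFactorial (r - j) *
        (n + r - (i + (r - j))).descFactorial j * ((o - i + j).descFactorial j *
        (m + r - (o - i + j)).descFactorial (r - j))) : ℕ) : ℤ), i + (r - j), o - i + j)
    else (0, 0, 0)

lemma trc_eq (n m r o : ℕ) (c d : ℕ → k) : trc n m r c d o = bil (ic k) (rawL n m r o) c d := by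
  unfold trc rawL
  rw [bil_flatMap_range]
  refine Finset.sum_congr rfl fun j _ => ?_
  unfold bil
  rw [List.map_map, sum_list_range, Finset.mul_sum]
  refine Finset.sum_congr rfl fun i _ => ?_
  simp only [Function.comp_apply]
  split_ifs with h
  · simp only [ic]; push_cast; ring
  · simp

/-- coefficient of `f i * g j` in a table -/
def cf (L : List (ℤ × ℕ × ℕ)) (i j : ℕ) : ℤ :=
  L.foldr (fun t s => if t.2.1 = i ∧ t.2.2 = j then t.1 + s else s) 0

lemma bil_cf (L : List (ℤ × ℕ × ℕ)) (n m : ℕ) (h : L.all (fun t => decide (t.2.1 < n ∧ t.2.2 < m)) = true)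
    (f g : ℕ → k) : bil (ic k) L f g =
      ∑ i ∈ Finset.range n, ∑ j ∈ Finset.range m, (cf L i j : k) * f i * g j := by
  induction L with
  | nil => simp [bil, cf]
  | cons t L ih =>
    obtain ⟨c, p, q⟩ := t
    simp only [List.all_cons, Bool.and_eq_true, decide_eq_true_eq] at h
    obtain ⟨⟨hp, hq⟩, h⟩ := h
    have e1 : bil (ic k) ((c, p, q) :: L) f g = (c : k) * f p * g q + bil (ic k) L f g := by
      simp [bil]
    have e2 : ∀ i j, (cf ((c, p, q) :: L) i j : k) * f i * g j =
        (if p = i then if q = j then (c : k) * f i * g j else 0 else 0) + (cf L i j : k) * f i * g j := by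
      intro i j
      have : cf ((c, p, q) :: L) i j = if p = i ∧ q = j then c + cf L i j else cf L i j := rfl
      rw [this]
      by_cases h1 : p = i <;> by_cases h2 : q = j <;> simp [h1, h2]
      ring
    rw [e1, ih h]
    simp_rw [e2, Finset.sum_add_distrib]
    congr 1
    rw [Finset.sum_eq_single p]
    · simp [hq]
    · intro b _ hb; simp [Ne.symm hb]
    · intro hh; exact absurd (Finset.mem_range.2 hp) hh

structure Good (k : Type*) [Field k] : Prop where
  h2 : (2 : k) ≠ 0
  h3 : (3 : k) ≠ 0
  h5 : (5 : k) ≠ 0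
  h7 : (7 : k) ≠ 0

lemma Good.smooth (H : Good k) (a b c d : ℕ) : ((2 ^ a * 3 ^ b * 5 ^ c * 7 ^ d : ℕ) : k) ≠ 0 := by
  push_cast
  exact mul_ne_zero (mul_ne_zero (mul_ne_zero (pow_ne_zero _ H.h2) (pow_ne_zero _ H.h3))
    (pow_ne_zero _ H.h5)) (pow_ne_zero _ H.h7)

lemma Good.ne (H : Good k) {n : ℕ} (a b c d : ℕ) (h : n = 2 ^ a * 3 ^ b * 5 ^ c * 7 ^ d) :
    (n : k) ≠ 0 := by
  rw [h]; exact H.smooth a b c d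

lemma CharOK.good (h : CharOK k) : Good k := by
  obtain ⟨h2, h3, h5, h7⟩ := h
  have key : ∀ p : ℕ, p.Prime → ringChar k ≠ p → (p : k) ≠ 0 := by
    intro p hp hne h0
    have hd := (ringChar.spec k p).1 h0
    rcases (Nat.dvd_prime hp).1 hd with h | h
    · exact CharP.ringChar_ne_one h
    · exact hne h
  exact ⟨by simpa using key 2 (by norm_num) h2, by simpa using key 3 (by norm_num) h3,
    by simpa using key 5 (by norm_num) h5, by simpa using key 7 (by norm_num) h7⟩

lemma tr_aux {A B N D : ℕ} (hA : (A : k) ≠ 0) (hD : (D : k) ≠ 0) (h : B * N * D = A)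
    (x y : k) (hx : x = N * y) : (B : k) / (A : k) * x = 1 / (D : k) * y := by
  rw [hx, div_mul_eq_mul_div, div_mul_eq_mul_div, div_eq_div_iff hA hD, ← h]
  push_cast; ring

/-- check that one table is `N` times another one -/
def chkB (n m N : ℕ) (L L' : List (ℤ × ℕ × ℕ)) : Bool :=
  L.all (fun t => decide (t.2.1 < n ∧ t.2.2 < m)) && L'.all (fun t => decide (t.2.1 < n ∧ t.2.2 < m)) &&
  (List.range n).all fun i => (List.range m).all fun j => decide (cf L i j = N * cf L' i j)

/-- the same up to symmetrization -/
def chkS (n N : ℕ) (L L' : List (ℤ × ℕ × ℕ)) : Bool :=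
  L.all (fun t => decide (t.2.1 < n ∧ t.2.2 < n)) && L'.all (fun t => decide (t.2.1 < n ∧ t.2.2 < n)) &&
  (List.range n).all fun i => (List.range n).all fun j =>
    decide (cf L i j + cf L j i = N * (cf L' i j + cf L' j i))

lemma chkB_spec {n m N : ℕ} {L L' : List (ℤ × ℕ × ℕ)} (h : chkB n m N L L' = true) (c d : ℕ → k) :
    bil (ic k) L c d = (N : k) * bil (ic k) L' c d := by
  simp only [chkB, Bool.and_eq_true] at h
  obtain ⟨⟨h1, h2⟩, h3⟩ := h
  rw [bil_cf L n m h1, bil_cf L' n m h2, Finset.mul_sum]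
  refine Finset.sum_congr rfl fun i hi => ?_
  rw [Finset.mul_sum]
  refine Finset.sum_congr rfl fun j hj => ?_
  have := List.all_eq_true.1 (List.all_eq_true.1 h3 i (by simpa using hi)) j (by simpa using hj)
  rw [of_decide_eq_true this]
  push_cast; ring

lemma chkS_spec (H : Good k) {n N : ℕ} {L L' : List (ℤ × ℕ × ℕ)} (h : chkS n N L L' = true) (c : ℕ → k) :
    bil (ic k) L c c = (N : k) * bil (ic k) L' c c := by
  simp only [chkS, Bool.and_eq_true] at h
  obtain ⟨⟨h1, h2⟩, h3⟩ := h
  have key : ∀ M : List (ℤ × ℕ × ℕ), M.all (fun t => decide (t.2.1 < n ∧ t.2.2 < n)) = true →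
      2 * bil (ic k) M c c =
      ∑ i ∈ Finset.range n, ∑ j ∈ Finset.range n, ((cf M i j + cf M j i : ℤ) : k) * c i * c j := by
    intro M hM
    have e := bil_cf M n n hM c c
    have e' := e
    rw [Finset.sum_comm] at e'
    rw [two_mul]
    nth_rewrite 1 [e]
    rw [e', ← Finset.sum_add_distrib]
    refine Finset.sum_congr rfl fun i _ => ?_
    rw [← Finset.sum_add_distrib]
    refine Finset.sum_congr rfl fun j _ => ?_
    push_cast; ring
  apply mul_left_cancel₀ H.h2
  rw [mul_left_comm, key L h1, key L' h2, Finset.mul_sum]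
  refine Finset.sum_congr rfl fun i hi => ?_
  rw [Finset.mul_sum]
  refine Finset.sum_congr rfl fun j hj => ?_
  have := List.all_eq_true.1 (List.all_eq_true.1 h3 i (by simpa using hi)) j (by simpa using hj)
  rw [of_decide_eq_true this]
  push_cast; ring

lemma tr884 (H : Good k) (c : ℕ → k) : transvectant 8 8 4 (bform 8 c) (bform 8 c) =
    bform 8 (fun o => 1 / ((1960 : ℕ) : k) * bop (ic k) tG c c o) := by
  refine (transvectant_bform 4 4 4 c c).trans (bform_congr fun o ho => ?_)
  refine tr_aux (N := 1440) (H.ne 14 4 2 2 (by decide)) (H.ne 3 0 1 2 (by decide)) (by decide) _ _ ?_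
  rw [trc_eq]
  have hc : ∀ o ≤ 8, chkS 9  1440 (rawL 4 4 4 o) (tG.getD o []) = true := by
    decide +kernel
  exact chkS_spec H (hc o ho) c

lemma tr886 (H : Good k) (c : ℕ → k) : transvectant 8 8 6 (bform 8 c) (bform 8 c) =
    bform 4 (fun o => 1 / ((784 : ℕ) : k) * bop (ic k) tK c c o) := by
  refine (transvectant_bform 2 2 6 c c).trans (bform_congr fun o ho => ?_)
  refine tr_aux (N := 518400) (H.ne 14 4 2 2 (by decide)) (H.ne 4 0 0 2 (by decide)) (by decide) _ _ ?_
  rw [trc_eq]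
  have hc : ∀ o ≤ 4, chkS 9  518400 (rawL 2 2 6 o) (tK.getD o []) = true := by
    decide +kernel
  exact chkS_spec H (hc o ho) c

lemma tr888 (H : Good k) (c d : ℕ → k) : transvectant 8 8 8 (bform 8 c) (bform 8 d) =
    bform 0 (fun o => 1 / ((280 : ℕ) : k) * bop (ic k) tT c d o) := by
  refine (transvectant_bform 0 0 8 c d).trans (bform_congr fun o ho => ?_)
  refine tr_aux (N := 5806080) (H.ne 14 4 2 2 (by decide)) (H.ne 3 0 1 1 (by decide)) (by decide) _ _ ?_
  rw [trc_eq]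
  have hc : ∀ o ≤ 0, chkB 9 9 5806080 (rawL 0 0 8 o) (tT.getD o []) = true := by
    decide +kernel
  exact chkB_spec (hc o ho) c d

lemma tr442 (H : Good k) (c : ℕ → k) : transvectant 4 4 2 (bform 4 c) (bform 4 c) =
    bform 4 (fun o => 1 / ((24 : ℕ) : k) * bop (ic k) tH c c o) := by
  refine (transvectant_bform 2 2 2 c c).trans (bform_congr fun o ho => ?_)
  refine tr_aux (N := 6) (H.ne 6 2 0 0 (by decide)) (H.ne 3 1 0 0 (by decide)) (by decide) _ _ ?_
  rw [trc_eq]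
  have hc : ∀ o ≤ 4, chkS 5  6 (rawL 2 2 2 o) (tH.getD o []) = true := by
    decide +kernel
  exact chkS_spec H (hc o ho) c

lemma tr844 (H : Good k) (c d : ℕ → k) : transvectant 8 4 4 (bform 8 c) (bform 4 d) =
    bform 4 (fun o => 1 / ((280 : ℕ) : k) * bop (ic k) tM c d o) := by
  refine (transvectant_bform 4 0 4 c d).trans (bform_congr fun o ho => ?_)
  refine tr_aux (N := 144) (H.ne 10 3 1 1 (by decide)) (H.ne 3 0 1 1 (by decide)) (by decide) _ _ ?_
  rw [trc_eq]
  have hc : ∀ o ≤ 4, chkB 9 5 144 (rawL 4 0 4 o) (tM.getD o []) = true := by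
    decide +kernel
  exact chkB_spec (hc o ho) c d

lemma tr444 (H : Good k) (c d : ℕ → k) : transvectant 4 4 4 (bform 4 c) (bform 4 d) =
    bform 0 (fun o => 1 / ((12 : ℕ) : k) * bop (ic k) tQ c d o) := by
  refine (transvectant_bform 0 0 4 c d).trans (bform_congr fun o ho => ?_)
  refine tr_aux (N := 48) (H.ne 6 2 0 0 (by decide)) (H.ne 2 1 0 0 (by decide)) (by decide) _ _ ?_
  rw [trc_eq]
  have hc : ∀ o ≤ 0, chkB 5 5 48 (rawL 0 0 4 o) (tQ.getD o []) = true := by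
    decide +kernel
  exact chkB_spec (hc o ho) c d

/-! ### The invariants over a general commutative ring -/

section gen
variable {R : Type*} [CommSemiring R] (w : ℤ → R) (a : ℕ → R)

def vK : ℕ → R := bop w tK a a
def vG : ℕ → R := bop w tG a a
def vH : ℕ → R := bop w tH (vK w a) (vK w a)
def vM : ℕ → R := bop w tM a (vK w a)
def vN : ℕ → R := bop w tM a (vH w a)
def vP : ℕ → R := bop w tM (vG w a) (vK w a)
def vQ : ℕ → R := bop w tM (vG w a) (vH w a)

/-- the scaled invariants of degree `2, …, 10`, in this order -/
def Jv : ℕ → R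
  | 0 => bop w tT a a 0
  | 1 => bop w tT a (vG w a) 0
  | 2 => bop w tQ (vK w a) (vK w a) 0
  | 3 => bop w tQ (vM w a) (vK w a) 0
  | 4 => bop w tQ (vK w a) (vH w a) 0
  | 5 => bop w tQ (vM w a) (vH w a) 0
  | 6 => bop w tQ (vP w a) (vH w a) 0
  | 7 => bop w tQ (vN w a) (vH w a) 0
  | 8 => bop w tQ (vQ w a) (vH w a) 0
  | _ => 0

end gen

/-- ratio between the scaled invariants and `J2, …, J10` -/
def rat : List ℕ := [2, 12, 2, 48, 8, 192, 192, 768, 768]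

lemma bil_smul (L : List (ℤ × ℕ × ℕ)) (s t : k) (f g : ℕ → k) :
    bil (ic k) L (fun i => s * f i) (fun i => t * g i) = s * t * bil (ic k) L f g := by
  unfold bil
  induction L with
  | nil => simp
  | cons x L ih => simp only [List.map_cons, List.sum_cons, ih]; ring

lemma bop_smul (L : List (List (ℤ × ℕ × ℕ))) (s t : k) (f g : ℕ → k) (o : ℕ) :
    bop (ic k) L (fun i => s * f i) (fun i => t * g i) o = s * t * bop (ic k) L f g o :=
  bil_smul _ _ _ _ _

def ext9 (a : Fin 9 → k) : ℕ → k := fun i => if h : i < 9 then a ⟨i, h⟩ else 0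

lemma covk_eq (H : Good k) (a : Fin 9 → k) :
    covk a = bform 4 (fun o => 1 / ((784 : ℕ) : k) * vK (ic k) (ext9 a) o) := by
  unfold covk; rw [octForm_eq]; exact tr886 H _

lemma covg_eq (H : Good k) (a : Fin 9 → k) :
    covg a = bform 8 (fun o => 1 / ((1960 : ℕ) : k) * vG (ic k) (ext9 a) o) := by
  unfold covg; rw [octForm_eq]; exact tr884 H _

lemma covh_eq (H : Good k) (a : Fin 9 → k) :
    covh a = bform 4 (fun o => 1 / ((24 : ℕ) : k) * (1 / ((784 : ℕ) : k) * (1 / ((784 : ℕ) : k))) *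
      vH (ic k) (ext9 a) o) := by
  unfold covh; rw [covk_eq H, tr442 H]; 
  refine bform_congr fun o _ => ?_
  rw [bop_smul, ← mul_assoc]; rfl

lemma covm_eq (H : Good k) (a : Fin 9 → k) :
    covm a = bform 4 (fun o => 1 / ((280 : ℕ) : k) * (1 / ((784 : ℕ) : k)) *
      vM (ic k) (ext9 a) o) := by
  unfold covm; rw [covk_eq H, octForm_eq, tr844 H]
  refine bform_congr fun o _ => ?_
  have := bop_smul tM 1 (1 / ((784 : ℕ) : k)) (ext9 a) (vK (ic k) (ext9 a)) o
  simp only [one_mul] at this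
  unfold vM
  rw [mul_assoc, ← this]; rfl

lemma covn_eq (H : Good k) (a : Fin 9 → k) :
    covn a = bform 4 (fun o => 1 / ((280 : ℕ) : k) * (1 / ((24 : ℕ) : k) * (1 / ((784 : ℕ) : k) * (1 / ((784 : ℕ) : k)))) *
      vN (ic k) (ext9 a) o) := by
  unfold covn; rw [covh_eq H, octForm_eq, tr844 H]
  refine bform_congr fun o _ => ?_
  have := bop_smul tM 1 (1 / ((24 : ℕ) : k) * (1 / ((784 : ℕ) : k) * (1 / ((784 : ℕ) : k)))) (ext9 a) (vH (ic k) (ext9 a)) o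
  simp only [one_mul] at this
  unfold vN
  rw [mul_assoc, ← this]; rfl

lemma covp_eq (H : Good k) (a : Fin 9 → k) :
    covp a = bform 4 (fun o => 1 / ((280 : ℕ) : k) * (1 / ((1960 : ℕ) : k) * (1 / ((784 : ℕ) : k))) *
      vP (ic k) (ext9 a) o) := by
  unfold covp; rw [covk_eq H, covg_eq H, tr844 H]
  refine bform_congr fun o _ => ?_
  rw [bop_smul, ← mul_assoc]; rfl

lemma covq_eq (H : Good k) (a : Fin 9 → k) :
    covq a = bform 4 (fun o => 1 / ((280 : ℕ) : k) * (1 / ((1960 : ℕ) : k) *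
      (1 / ((24 : ℕ) : k) * (1 / ((784 : ℕ) : k) * (1 / ((784 : ℕ) : k))))) *
      vQ (ic k) (ext9 a) o) := by
  unfold covq; rw [covh_eq H, covg_eq H, tr844 H]
  refine bform_congr fun o _ => ?_
  rw [bop_smul, ← mul_assoc]; rfl

lemma J_eq (H : Good k) (a : Fin 9 → k) (i : ℕ) (hi : i < 9) :
    ((rat.getD i 1 : ℕ) : k) * Jinv (i + 2) a = Jv (ic k) (ext9 a) i := by
  have e8 : octForm a = bform 8 (fun i => 1 * ext9 a i) := by
    simp only [one_mul]; exact octForm_eq a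
  have h2 := H.h2
  have h3 := H.h3
  have h5 := H.h5
  have h7 := H.h7
  have e12 : (12 : k) = 2 ^ 2 * 3 := by norm_num
  have e24 : (24 : k) = 2 ^ 3 * 3 := by norm_num
  have e48 : (48 : k) = 2 ^ 4 * 3 := by norm_num
  have e192 : (192 : k) = 2 ^ 6 * 3 := by norm_num
  have e768 : (768 : k) = 2 ^ 8 * 3 := by norm_num
  have e280 : (280 : k) = 2 ^ 3 * 5 * 7 := by norm_num
  have e784 : (784 : k) = 2 ^ 4 * 7 ^ 2 := by norm_num
  have e1960 : (1960 : k) = 2 ^ 3 * 5 * 7 ^ 2 := by norm_num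
  have e8' : (8 : k) = 2 ^ 3 := by norm_num
  interval_cases i <;>
  simp only [rat, Jinv, Jv, J2, J3, J4, J5, J6, J7, J8, J9, J10, covk_eq H, covg_eq H, covh_eq H,
      covm_eq H, covn_eq H, covp_eq H, covq_eq H, e8, tr444 H, tr888 H, constantCoeff_bform,
      bop_smul, List.getD_cons_zero, List.getD_cons_succ] <;>
  · push_cast
    simp only [e12, e24, e48, e192, e768, e280, e784, e1960, e8']
    field_simp
    try ring


/-! ### Group action on coefficient vectors -/

section act
variable {R : Type*} [CommRing R]

/-- substitution `X ↦ X + Y` -/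
def sh (n : ℕ) (f : ℕ → R) : ℕ → R := fun i => ∑ j ∈ Finset.range (n + 1), (j.choose i : R) * f j

/-- exchange of the variables -/
def sw (n : ℕ) (f : ℕ → R) : ℕ → R := fun i => if i ≤ n then f (n - i) else 0

/-- diagonal substitution -/
def tor (s u : R) (f : ℕ → R) : ℕ → R := fun i => s * u ^ i * f i

lemma bop_ge (w : ℤ → R) (LL : List (List (ℤ × ℕ × ℕ))) (f g : ℕ → R) (o : ℕ) (h : LL.length ≤ o) :
    bop w LL f g o = 0 := by
  unfold bop; rw [List.getD_eq_default _ _ h]; simp [bil]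

lemma sh_ge (n : ℕ) (f : ℕ → R) (o : ℕ) (h : n + 1 ≤ o) : sh n f o = 0 := by
  unfold sh
  refine Finset.sum_eq_zero fun j hj => ?_
  rw [Nat.choose_eq_zero_of_lt (by simp at hj; omega)]; simp

lemma sw_ge (n : ℕ) (f : ℕ → R) (o : ℕ) (h : n + 1 ≤ o) : sw n f o = 0 := by
  unfold sw
  rw [if_neg (by omega)]

lemma sh8_0 (f : ℕ → R) : sh 8 f 0 = f 0 + f 1 + f 2 + f 3 + f 4 + f 5 + f 6 + f 7 + f 8 := by
  simp [sh, Finset.sum_range_succ, Nat.choose]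
lemma sh8_1 (f : ℕ → R) : sh 8 f 1 = f 1 + 2 * f 2 + 3 * f 3 + 4 * f 4 + 5 * f 5 + 6 * f 6 + 7 * f 7 + 8 * f 8 := by
  simp [sh, Finset.sum_range_succ, Nat.choose]
lemma sh8_2 (f : ℕ → R) : sh 8 f 2 = f 2 + 3 * f 3 + 6 * f 4 + 10 * f 5 + 15 * f 6 + 21 * f 7 + 28 * f 8 := by
  simp [sh, Finset.sum_range_succ, Nat.choose]
lemma sh8_3 (f : ℕ → R) : sh 8 f 3 = f 3 + 4 * f 4 + 10 * f 5 + 20 * f 6 + 35 * f 7 + 56 * f 8 := by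
  simp [sh, Finset.sum_range_succ, Nat.choose]
lemma sh8_4 (f : ℕ → R) : sh 8 f 4 = f 4 + 5 * f 5 + 15 * f 6 + 35 * f 7 + 70 * f 8 := by
  simp [sh, Finset.sum_range_succ, Nat.choose]
lemma sh8_5 (f : ℕ → R) : sh 8 f 5 = f 5 + 6 * f 6 + 21 * f 7 + 56 * f 8 := by
  simp [sh, Finset.sum_range_succ, Nat.choose]
lemma sh8_6 (f : ℕ → R) : sh 8 f 6 = f 6 + 7 * f 7 + 28 * f 8 := by
  simp [sh, Finset.sum_range_succ, Nat.choose]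
lemma sh8_7 (f : ℕ → R) : sh 8 f 7 = f 7 + 8 * f 8 := by
  simp [sh, Finset.sum_range_succ, Nat.choose]
lemma sh8_8 (f : ℕ → R) : sh 8 f 8 = f 8 := by
  simp [sh, Finset.sum_range_succ, Nat.choose]
lemma sh4_0 (f : ℕ → R) : sh 4 f 0 = f 0 + f 1 + f 2 + f 3 + f 4 := by
  simp [sh, Finset.sum_range_succ, Nat.choose]
lemma sh4_1 (f : ℕ → R) : sh 4 f 1 = f 1 + 2 * f 2 + 3 * f 3 + 4 * f 4 := by
  simp [sh, Finset.sum_range_succ, Nat.choose]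
lemma sh4_2 (f : ℕ → R) : sh 4 f 2 = f 2 + 3 * f 3 + 6 * f 4 := by
  simp [sh, Finset.sum_range_succ, Nat.choose]
lemma sh4_3 (f : ℕ → R) : sh 4 f 3 = f 3 + 4 * f 4 := by
  simp [sh, Finset.sum_range_succ, Nat.choose]
lemma sh4_4 (f : ℕ → R) : sh 4 f 4 = f 4 := by
  simp [sh, Finset.sum_range_succ, Nat.choose]

lemma shG (f : ℕ → R) : bop (ic R) tG (sh 8 f) (sh 8 f) = sh 8 (bop (ic R) tG f f) := by
  funext o
  rcases Nat.lt_or_ge o 9 with h | h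
  · interval_cases o <;>
    · simp only [bop, bil, tG, List.getD_cons_zero, List.getD_cons_succ, List.map_cons, List.map_nil, List.sum_cons, List.sum_nil, ic, sh8_0, sh8_1, sh8_2, sh8_3, sh8_4, sh8_5, sh8_6, sh8_7, sh8_8, sh4_0, sh4_1, sh4_2, sh4_3, sh4_4]
      push_cast
      ring
  · rw [bop_ge _ _ _ _ _ h, sh_ge _ _ _ h]

lemma shK (f : ℕ → R) : bop (ic R) tK (sh 8 f) (sh 8 f) = sh 4 (bop (ic R) tK f f) := by
  funext o
  rcases Nat.lt_or_ge o 5 with h | h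
  · interval_cases o <;>
    · simp only [bop, bil, tK, List.getD_cons_zero, List.getD_cons_succ, List.map_cons, List.map_nil, List.sum_cons, List.sum_nil, ic, sh8_0, sh8_1, sh8_2, sh8_3, sh8_4, sh8_5, sh8_6, sh8_7, sh8_8, sh4_0, sh4_1, sh4_2, sh4_3, sh4_4]
      push_cast
      ring
  · rw [bop_ge _ _ _ _ _ h, sh_ge _ _ _ h]

lemma shH (f : ℕ → R) : bop (ic R) tH (sh 4 f) (sh 4 f) = sh 4 (bop (ic R) tH f f) := by
  funext o
  rcases Nat.lt_or_ge o 5 with h | h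
  · interval_cases o <;>
    · simp only [bop, bil, tH, List.getD_cons_zero, List.getD_cons_succ, List.map_cons, List.map_nil, List.sum_cons, List.sum_nil, ic, sh8_0, sh8_1, sh8_2, sh8_3, sh8_4, sh8_5, sh8_6, sh8_7, sh8_8, sh4_0, sh4_1, sh4_2, sh4_3, sh4_4]
      push_cast
      ring
  · rw [bop_ge _ _ _ _ _ h, sh_ge _ _ _ h]

lemma shM (f g : ℕ → R) : bop (ic R) tM (sh 8 f) (sh 4 g) = sh 4 (bop (ic R) tM f g) := by
  funext o
  rcases Nat.lt_or_ge o 5 with h | h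
  · interval_cases o <;>
    · simp only [bop, bil, tM, List.getD_cons_zero, List.getD_cons_succ, List.map_cons, List.map_nil, List.sum_cons, List.sum_nil, ic, sh8_0, sh8_1, sh8_2, sh8_3, sh8_4, sh8_5, sh8_6, sh8_7, sh8_8, sh4_0, sh4_1, sh4_2, sh4_3, sh4_4]
      push_cast
      ring
  · rw [bop_ge _ _ _ _ _ h, sh_ge _ _ _ h]

lemma shQ (f g : ℕ → R) : bop (ic R) tQ (sh 4 f) (sh 4 g) 0 = bop (ic R) tQ f g 0 := by
  simp only [bop, bil, tQ, List.getD_cons_zero, List.getD_cons_succ, List.map_cons, List.map_nil, List.sum_cons, List.sum_nil, ic, sh8_0, sh8_1, sh8_2, sh8_3, sh8_4, sh8_5, sh8_6, sh8_7, sh8_8, sh4_0, sh4_1, sh4_2, sh4_3, sh4_4]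
  push_cast
  ring

lemma shT (f g : ℕ → R) : bop (ic R) tT (sh 8 f) (sh 8 g) 0 = bop (ic R) tT f g 0 := by
  simp only [bop, bil, tT, List.getD_cons_zero, List.getD_cons_succ, List.map_cons, List.map_nil, List.sum_cons, List.sum_nil, ic, sh8_0, sh8_1, sh8_2, sh8_3, sh8_4, sh8_5, sh8_6, sh8_7, sh8_8, sh4_0, sh4_1, sh4_2, sh4_3, sh4_4]
  push_cast
  ring

lemma swG (f : ℕ → R) : bop (ic R) tG (sw 8 f) (sw 8 f) = sw 8 (bop (ic R) tG f f) := by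
  funext o
  rcases Nat.lt_or_ge o 9 with h | h
  · interval_cases o <;>
    · simp [bop, bil, tG, sw]
      ring
  · rw [bop_ge _ _ _ _ _ h, sw_ge _ _ _ h]

lemma swK (f : ℕ → R) : bop (ic R) tK (sw 8 f) (sw 8 f) = sw 4 (bop (ic R) tK f f) := by
  funext o
  rcases Nat.lt_or_ge o 5 with h | h
  · interval_cases o <;>
    · simp [bop, bil, tK, sw]
      ring
  · rw [bop_ge _ _ _ _ _ h, sw_ge _ _ _ h]

lemma swH (f : ℕ → R) : bop (ic R) tH (sw 4 f) (sw 4 f) = sw 4 (bop (ic R) tH f f) := by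
  funext o
  rcases Nat.lt_or_ge o 5 with h | h
  · interval_cases o <;>
    · simp [bop, bil, tH, sw]
      ring
  · rw [bop_ge _ _ _ _ _ h, sw_ge _ _ _ h]

lemma swM (f g : ℕ → R) : bop (ic R) tM (sw 8 f) (sw 4 g) = sw 4 (bop (ic R) tM f g) := by
  funext o
  rcases Nat.lt_or_ge o 5 with h | h
  · interval_cases o <;>
    · simp [bop, bil, tM, sw]
      ring
  · rw [bop_ge _ _ _ _ _ h, sw_ge _ _ _ h]

lemma swQ (f g : ℕ → R) : bop (ic R) tQ (sw 4 f) (sw 4 g) 0 = bop (ic R) tQ f g 0 := by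
  simp [bop, bil, tQ, sw]
  ring

lemma swT (f g : ℕ → R) : bop (ic R) tT (sw 8 f) (sw 8 g) 0 = bop (ic R) tT f g 0 := by
  simp [bop, bil, tT, sw]
  ring

lemma bil_tor (L : List (ℤ × ℕ × ℕ)) (m : ℕ) (h : L.all (fun t => decide (t.2.1 + t.2.2 = m)) = true)
    (s s' u : R) (f g : ℕ → R) : bil (ic R) L (tor s u f) (tor s' u g) = s * s' * u ^ m * bil (ic R) L f g := by
  induction L with
  | nil => simp [bil]
  | cons t L ih =>
    simp only [List.all_cons, Bool.and_eq_true, decide_eq_true_eq] at h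
    have := ih h.2
    unfold bil at *
    rw [List.map_cons, List.sum_cons, List.map_cons, List.sum_cons, this, ← h.1]
    unfold tor; ring

lemma bop_tor (LL : List (List (ℤ × ℕ × ℕ))) (r : ℕ)
    (h : ∀ o < LL.length, (LL.getD o []).all (fun t => decide (t.2.1 + t.2.2 = o + r)) = true)
    (s s' u : R) (f g : ℕ → R) :
    bop (ic R) LL (tor s u f) (tor s' u g) = tor (s * s' * u ^ r) u (bop (ic R) LL f g) := by
  funext o
  rcases Nat.lt_or_ge o LL.length with ho | ho
  · unfold bop
    rw [bil_tor _ _ (h o ho), tor]; ring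
  · unfold tor
    rw [bop_ge _ _ _ _ _ ho, bop_ge _ _ _ _ _ ho]; simp

lemma torG (s s' u : R) (f g : ℕ → R) :
    bop (ic R) tG (tor s u f) (tor s' u g) = tor (s * s' * u ^ 4) u (bop (ic R) tG f g) :=
  bop_tor _ _ (by decide) _ _ _ _ _
lemma torK (s s' u : R) (f g : ℕ → R) :
    bop (ic R) tK (tor s u f) (tor s' u g) = tor (s * s' * u ^ 6) u (bop (ic R) tK f g) :=
  bop_tor _ _ (by decide) _ _ _ _ _
lemma torH (s s' u : R) (f g : ℕ → R) :
    bop (ic R) tH (tor s u f) (tor s' u g) = tor (s * s' * u ^ 2) u (bop (ic R) tH f g) :=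
  bop_tor _ _ (by decide) _ _ _ _ _
lemma torM (s s' u : R) (f g : ℕ → R) :
    bop (ic R) tM (tor s u f) (tor s' u g) = tor (s * s' * u ^ 4) u (bop (ic R) tM f g) :=
  bop_tor _ _ (by decide) _ _ _ _ _
lemma torQ (s s' u : R) (f g : ℕ → R) :
    bop (ic R) tQ (tor s u f) (tor s' u g) = tor (s * s' * u ^ 4) u (bop (ic R) tQ f g) :=
  bop_tor _ _ (by decide) _ _ _ _ _
lemma torT (s s' u : R) (f g : ℕ → R) :
    bop (ic R) tT (tor s u f) (tor s' u g) = tor (s * s' * u ^ 8) u (bop (ic R) tT f g) :=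
  bop_tor _ _ (by decide) _ _ _ _ _

lemma Jv_sh (a : ℕ → R) : Jv (ic R) (sh 8 a) = Jv (ic R) a := by
  funext i
  rcases Nat.lt_or_ge i 9 with h | h
  · interval_cases i <;>
    simp only [Jv, vN, vM, vP, vQ, vH, vK, vG, shK, shG, shH, shM, shQ, shT]
  · obtain ⟨j, rfl⟩ := Nat.exists_eq_add_of_le' h
    rfl

lemma Jv_sw (a : ℕ → R) : Jv (ic R) (sw 8 a) = Jv (ic R) a := by
  funext i
  rcases Nat.lt_or_ge i 9 with h | h
  · interval_cases i <;>
    simp only [Jv, vN, vM, vP, vQ, vH, vK, vG, swK, swG, swH, swM, swQ, swT]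
  · obtain ⟨j, rfl⟩ := Nat.exists_eq_add_of_le' h
    rfl

lemma Jv_tor (s u : R) (a : ℕ → R) (i : ℕ) :
    Jv (ic R) (tor s u a) i = (s * u ^ 4) ^ (i + 2) * Jv (ic R) a i := by
  rcases Nat.lt_or_ge i 9 with h | h
  · interval_cases i <;>
    · simp only [Jv, vN, vM, vP, vQ, vH, vK, vG, torK, torG, torH, torM, torQ, torT]
      rw [tor]
      ring
  · obtain ⟨j, rfl⟩ := Nat.exists_eq_add_of_le' h
    simp [Jv]

end act

/-! ### Relations -/

/-- value of a polynomial given by a list of coefficients and lists of variables -/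
def evR {R : Type*} [CommSemiring R] (w : ℤ → R) (L : List (ℤ × List ℕ)) (J : ℕ → R) : R :=
  (L.map fun t => w t.1 * (t.2.map J).prod).sum

lemma evR_hom {R S : Type*} [CommRing R] [CommRing S] (φ : R →+* S) (L : List (ℤ × List ℕ))
    (J : ℕ → R) : φ (evR (ic R) L J) = evR (ic S) L (fun i => φ (J i)) := by
  unfold evR
  rw [map_list_sum, List.map_map]
  congr 1
  refine List.map_congr_left fun t _ => ?_
  simp only [Function.comp_apply, map_mul, ic, map_intCast, map_list_prod, List.map_map]
  rfl

lemma bil_hom {R S : Type*} [CommRing R] [CommRing S] (φ : R →+* S) (L : List (ℤ × ℕ × ℕ))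
    (f g : ℕ → R) : φ (bil (ic R) L f g) = bil (ic S) L (fun i => φ (f i)) (fun i => φ (g i)) := by
  unfold bil
  rw [map_list_sum, List.map_map]
  congr 1
  refine List.map_congr_left fun t _ => ?_
  simp [ic]

lemma bop_hom {R S : Type*} [CommRing R] [CommRing S] (φ : R →+* S) (LL : List (List (ℤ × ℕ × ℕ)))
    (f g : ℕ → R) : (fun o => φ (bop (ic R) LL f g o)) =
      bop (ic S) LL (fun i => φ (f i)) (fun i => φ (g i)) := by
  funext o
  exact bil_hom φ _ f g

lemma Jv_hom {R S : Type*} [CommRing R] [CommRing S] (φ : R →+* S) (a : ℕ → R) (i : ℕ) :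
    φ (Jv (ic R) a i) = Jv (ic S) (fun i => φ (a i)) i := by
  have hb : ∀ LL (f g : ℕ → R) (o : ℕ), φ (bop (ic R) LL f g o) =
      bop (ic S) LL (fun i => φ (f i)) (fun i => φ (g i)) o := fun LL f g o => bil_hom φ _ f g
  rcases Nat.lt_or_ge i 9 with h | h
  · interval_cases i <;>
    simp only [Jv, vN, vM, vP, vQ, vH, vK, vG, hb]
  · obtain ⟨j, rfl⟩ := Nat.exists_eq_add_of_le' h
    simp [Jv]

/-- the relation `L` holds at the coefficient vector `a` -/
def Zr {R : Type*} [CommRing R] (L : List (ℤ × List ℕ)) (a : ℕ → R) : Prop :=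
  evR (ic R) L (Jv (ic R) a) = 0

lemma Zr_hom {R S : Type*} [CommRing R] [CommRing S] (φ : R →+* S) (L : List (ℤ × List ℕ))
    (a : ℕ → R) (h : Zr L a) : Zr L (fun i => φ (a i)) := by
  unfold Zr at *
  have := congrArg φ h
  rw [evR_hom, map_zero] at this
  simpa only [Jv_hom] using this

lemma Zr_of_inj {R S : Type*} [CommRing R] [CommRing S] (φ : R →+* S) (hφ : Function.Injective φ)
    (L : List (ℤ × List ℕ)) (a : ℕ → R) (h : Zr L (fun i => φ (a i))) : Zr L a := by
  unfold Zr at *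
  apply hφ
  rw [evR_hom, map_zero]
  simpa only [Jv_hom] using h

/-- homogeneity check -/
def homR (d : ℕ) (L : List (ℤ × List ℕ)) : Bool :=
  L.all fun t => decide ((t.2.map (fun i => i + 2)).sum = d)

lemma evR_scale {R : Type*} [CommRing R] (d : ℕ) (L : List (ℤ × List ℕ)) (h : homR d L = true)
    (c : R) (J : ℕ → R) : evR (ic R) L (fun i => c ^ (i + 2) * J i) = c ^ d * evR (ic R) L J := by
  have key : ∀ l : List ℕ, (l.map (fun i => c ^ (i + 2) * J i)).prod =
      c ^ (l.map (fun i => i + 2)).sum * (l.map J).prod := by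
    intro l
    induction l with
    | nil => simp
    | cons x l ih => simp only [List.map_cons, List.prod_cons, List.sum_cons, ih]; ring
  unfold homR at h
  unfold evR
  induction L with
  | nil => simp
  | cons t L ih =>
    simp only [List.all_cons, Bool.and_eq_true, decide_eq_true_eq] at h
    rw [List.map_cons, List.sum_cons, List.map_cons, List.sum_cons, ih h.2, key, h.1]
    ring

lemma Zr_tor {K : Type*} [Field K] {d : ℕ} {L : List (ℤ × List ℕ)} (h : homR d L = true)
    {s u : K} (hs : s ≠ 0) (hu : u ≠ 0) (a : ℕ → K) : Zr L (tor s u a) ↔ Zr L a := by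
  unfold Zr
  have : Jv (ic K) (tor s u a) = fun i => (s * u ^ 4) ^ (i + 2) * Jv (ic K) a i :=
    funext fun i => Jv_tor s u a i
  rw [this, evR_scale d L h, mul_eq_zero, or_iff_right]
  exact pow_ne_zero _ (mul_ne_zero hs (pow_ne_zero _ hu))

lemma Zr_sh {R : Type*} [CommRing R] (L : List (ℤ × List ℕ)) (a : ℕ → R) : Zr L (sh 8 a) ↔ Zr L a := by
  unfold Zr; rw [Jv_sh]

lemma Zr_sw {R : Type*} [CommRing R] (L : List (ℤ × List ℕ)) (a : ℕ → R) : Zr L (sw 8 a) ↔ Zr L a := by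
  unfold Zr; rw [Jv_sw]

lemma bil_congr {R : Type*} [CommRing R] (n m : ℕ) (L : List (ℤ × ℕ × ℕ))
    (h : L.all (fun t => decide (t.2.1 < n ∧ t.2.2 < m)) = true) {f f' g g' : ℕ → R}
    (hf : ∀ i < n, f i = f' i) (hg : ∀ i < m, g i = g' i) : bil (ic R) L f g = bil (ic R) L f' g' := by
  unfold bil
  congr 1
  refine List.map_congr_left fun t ht => ?_
  have := of_decide_eq_true (List.all_eq_true.1 h t ht)
  rw [hf _ this.1, hg _ this.2]

/-- coefficient vector with only the first nine entries -/
def cut {R : Type*} [CommRing R] (a : ℕ → R) : ℕ → R := fun i => if i < 9 then a i else 0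

lemma Jv_cut {R : Type*} [CommRing R] (a : ℕ → R) : Jv (ic R) (cut a) = Jv (ic R) a := by
  have := Jv_sw (sw 8 a)
  have e : sw 8 (sw 8 a) = cut a := by
    funext i
    unfold sw cut
    by_cases h : i ≤ 8
    · have h' : i < 9 := by omega
      have h2 : 8 - (8 - i) = i := by omega
      simp [h, h', h2]
    · have h' : ¬ i < 9 := by omega
      simp [h, h']
  rw [e, Jv_sw] at this
  exact this

/-- reduction to the slice `a 0 = a 8 = 0` over an algebraically closed field -/
lemma Zr_slice {K : Type*} [Field K] [IsAlgClosed K] {d : ℕ} {L : List (ℤ × List ℕ)}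
    (h : homR d L = true) (hs : ∀ a : ℕ → K, a 0 = 0 → a 8 = 0 → Zr L a) (a : ℕ → K) : Zr L a := by
  have step : ∀ a : ℕ → K, (∃ j, 1 ≤ j ∧ j ≤ 8 ∧ a j ≠ 0) →
      ∃ b : ℕ → K, b 0 = 0 ∧ (a 8 = 0 → b 8 = 0) ∧ (Zr L b ↔ Zr L a) := by
    rintro a ⟨j, hj1, hj8, hj⟩
    let p : Polynomial K := ∑ i ∈ Finset.range 9, Polynomial.monomial i (a i)
    have hc : ∀ i < 9, p.coeff i = a i := by
      intro i hi
      simp only [p, Polynomial.finsetSum_coeff, Polynomial.coeff_monomial]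
      simp [hi]
    have hdeg : p.degree ≠ 0 := by
      intro h0
      have := Polynomial.coeff_eq_zero_of_degree_lt (n := j) (p := p)
        (by rw [h0]; exact_mod_cast hj1)
      rw [hc j (by omega)] at this
      exact hj this
    obtain ⟨t, ht⟩ := IsAlgClosed.exists_root p hdeg
    have ht' : ∑ i ∈ Finset.range 9, a i * t ^ i = 0 := by
      have := ht
      rw [Polynomial.IsRoot, Polynomial.eval_finsetSum] at this
      simpa [Polynomial.eval_monomial] using this
    by_cases h0 : t = 0
    · refine ⟨a, ?_, fun h => h, Iff.rfl⟩
      simpa [h0, Finset.sum_range_succ] using ht'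
    · refine ⟨sh 8 (tor 1 t a), ?_, ?_, ?_⟩
      · simp only [sh, tor, Nat.choose_zero_right]
        rw [← ht']
        refine Finset.sum_congr rfl fun i _ => ?_
        push_cast; ring
      · intro h8
        simp [sh, tor, Finset.sum_range_succ, Nat.choose, h8]
      · rw [Zr_sh, Zr_tor h one_ne_zero h0]
  have zero : ∀ a : ℕ → K, (∀ j, 1 ≤ j → j ≤ 8 → a j = 0) → Zr L a := by
    intro a ha
    have hJ : Jv (ic K) a = Jv (ic K) (fun _ => (0 : K)) := by
      have hK : vK (ic K) a = vK (ic K) (fun _ => (0 : K)) := by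
        funext o
        rcases Nat.lt_or_ge o 5 with h | h
        · interval_cases o <;> simp [vK, bop, bil, tK, ha]
        · unfold vK; rw [bop_ge _ _ _ _ _ h, bop_ge _ _ _ _ _ h]
      have hG : vG (ic K) a = vG (ic K) (fun _ => (0 : K)) := by
        funext o
        rcases Nat.lt_or_ge o 9 with h | h
        · interval_cases o <;> simp [vG, bop, bil, tG, ha]
        · unfold vG; rw [bop_ge _ _ _ _ _ h, bop_ge _ _ _ _ _ h]
      have hz : vK (ic K) (fun _ => (0 : K)) = fun _ => 0 := by
        funext o
        rcases Nat.lt_or_ge o 5 with h | h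
        · interval_cases o <;> simp [vK, bop, bil, tK]
        · unfold vK; rw [bop_ge _ _ _ _ _ h]
      have hz' : vG (ic K) (fun _ => (0 : K)) = fun _ => 0 := by
        funext o
        rcases Nat.lt_or_ge o 9 with h | h
        · interval_cases o <;> simp [vG, bop, bil, tG]
        · unfold vG; rw [bop_ge _ _ _ _ _ h]
      have hb : ∀ LL (f : ℕ → K), bop (ic K) LL f (fun _ => 0) = fun _ => 0 := by
        intro LL f; funext o; simp [bop, bil]
      funext i
      rcases Nat.lt_or_ge i 9 with h | h
      · interval_cases i <;>
        simp only [Jv, vN, vM, vP, vQ, vH, hK, hG, hz, hz', hb]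
        simp [bop, bil, tT, ha]
      · obtain ⟨j, rfl⟩ := Nat.exists_eq_add_of_le' h
        rfl
    have := hs (fun _ => 0) rfl rfl
    unfold Zr at *
    rw [hJ]; exact this
  by_cases h1 : ∃ j, 1 ≤ j ∧ j ≤ 8 ∧ a j ≠ 0
  · obtain ⟨b, hb0, -, hb⟩ := step a h1
    rw [← hb, ← Zr_sw]
    have h8 : sw 8 b 8 = 0 := by simp [sw, hb0]
    by_cases h2 : ∃ j, 1 ≤ j ∧ j ≤ 8 ∧ sw 8 b j ≠ 0
    · obtain ⟨c, hc0, hc8, hc⟩ := step _ h2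
      rw [← hc]
      exact hs c hc0 (hc8 h8)
    · push Not at h2
      exact zero _ h2
  · push Not at h1
    exact zero _ h1


/-! ### Norms on towers of polynomial rings -/

/-- a size function on a commutative ring -/
structure Nrm (A : Type*) [CommRing A] where
  N : A → ℕ
  one : N 1 ≤ 1
  add : ∀ a b, N (a + b) ≤ N a + N b
  mul : ∀ a b, N (a * b) ≤ N a * N b
  zsm : ∀ (z : ℤ) a, N ((z : A) * a) = z.natAbs * N a
  eq0 : ∀ a, N a = 0 → a = 0

namespace Nrm
variable {A : Type*} [CommRing A] (ν : Nrm A)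

lemma zero : ν.N 0 = 0 := by
  have := ν.zsm 0 0
  simpa using this

lemma int (z : ℤ) : ν.N (z : A) ≤ z.natAbs := by
  have := ν.zsm z 1
  rw [mul_one] at this
  rw [this]
  exact (Nat.mul_le_mul_left _ ν.one).trans (by simp)

lemma nat (z : ℕ) : ν.N (z : A) ≤ z := by
  have := ν.int z
  simpa using this

lemma neg (a : A) : ν.N (-a) = ν.N a := by
  have := ν.zsm (-1) a
  simpa using this

lemma sum {ι : Type*} (s : Finset ι) (f : ι → A) : ν.N (∑ i ∈ s, f i) ≤ ∑ i ∈ s, ν.N (f i) := by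
  classical
  induction s using Finset.induction_on with
  | empty => simp [ν.zero]
  | insert a s ha ih =>
    rw [Finset.sum_insert ha, Finset.sum_insert ha]
    exact (ν.add _ _).trans (by omega)

def pN (c : ℕ) (p : Polynomial A) : ℕ := p.sum fun i a => ν.N a * c ^ i

lemma pN_range (c : ℕ) (p : Polynomial A) (n : ℕ) (h : p.natDegree < n) :
    ν.pN c p = ∑ i ∈ Finset.range n, ν.N (p.coeff i) * c ^ i := by
  unfold pN
  exact Polynomial.sum_over_range' p (fun i => by rw [ν.zero, zero_mul]) n h

lemma pN_add (c : ℕ) (p q : Polynomial A) : ν.pN c (p + q) ≤ ν.pN c p + ν.pN c q := by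
  have hn := Polynomial.natDegree_add_le p q
  set n := max p.natDegree q.natDegree + 1 with hn'
  rw [ν.pN_range c (p + q) n (by omega), ν.pN_range c p n (by omega), ν.pN_range c q n (by omega),
    ← Finset.sum_add_distrib]
  refine Finset.sum_le_sum fun i _ => ?_
  rw [Polynomial.coeff_add, ← add_mul]
  exact Nat.mul_le_mul_right _ (ν.add _ _)

lemma pN_zero (c : ℕ) : ν.pN c 0 = 0 := by simp [pN]

lemma pN_sum {ι : Type*} (c : ℕ) (s : Finset ι) (f : ι → Polynomial A) :
    ν.pN c (∑ i ∈ s, f i) ≤ ∑ i ∈ s, ν.pN c (f i) := by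
  classical
  induction s using Finset.induction_on with
  | empty => simp [ν.pN_zero]
  | insert a s ha ih =>
    rw [Finset.sum_insert ha, Finset.sum_insert ha]
    exact (ν.pN_add _ _ _).trans (by omega)

lemma pN_monomial (c i : ℕ) (a : A) : ν.pN c (Polynomial.monomial i a) = ν.N a * c ^ i := by
  unfold pN
  rw [Polynomial.sum_monomial_index]
  rw [ν.zero, zero_mul]

lemma pN_mul (c : ℕ) (p q : Polynomial A) : ν.pN c (p * q) ≤ ν.pN c p * ν.pN c q := by
  rw [Polynomial.mul_eq_sum_sum]
  have hdef : ∀ r : Polynomial A, ν.pN c r = ∑ i ∈ r.support, ν.N (r.coeff i) * c ^ i := fun _ => rfl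
  rw [hdef p, hdef q]
  refine (ν.pN_sum _ _ _).trans ?_
  rw [Finset.sum_mul]
  refine Finset.sum_le_sum fun i _ => ?_
  rw [Polynomial.sum_def, Finset.mul_sum]
  refine (ν.pN_sum _ _ _).trans ?_
  refine Finset.sum_le_sum fun j _ => ?_
  rw [ν.pN_monomial, pow_add]
  calc ν.N (p.coeff i * q.coeff j) * (c ^ i * c ^ j)
      ≤ (ν.N (p.coeff i) * ν.N (q.coeff j)) * (c ^ i * c ^ j) := Nat.mul_le_mul_right _ (ν.mul _ _)
    _ = _ := by ring

/-- the norm on `A[X]` for which `X` has norm `c` -/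
def poly (c : ℕ) (hc : 0 < c) : Nrm (Polynomial A) where
  N := ν.pN c
  one := by
    rw [← Polynomial.C_1, ← Polynomial.monomial_zero_left, pN_monomial]
    simpa using ν.one
  add := ν.pN_add c
  mul := ν.pN_mul c
  zsm z p := by
    have hd : ((z : Polynomial A) * p).natDegree < p.natDegree + 1 :=
      lt_of_le_of_lt (Polynomial.natDegree_mul_le) (by simp)
    rw [ν.pN_range c _ _ hd, ν.pN_range c p _ (Nat.lt_succ_self _), Finset.mul_sum]
    refine Finset.sum_congr rfl fun i _ => ?_
    rw [Polynomial.coeff_intCast_mul, ν.zsm, mul_assoc]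
  eq0 p h := by
    ext i
    rw [Polynomial.coeff_zero]
    apply ν.eq0
    rw [ν.pN_range c p (max p.natDegree i + 1) (by omega), Finset.sum_eq_zero_iff] at h
    have := h i (by simp)
    rcases Nat.mul_eq_zero.1 this with h | h
    · exact h
    · exact absurd h (pow_ne_zero _ hc.ne')

lemma poly_X (c : ℕ) (hc : 0 < c) : (ν.poly c hc).N Polynomial.X ≤ c := by
  change ν.pN c Polynomial.X ≤ c
  rw [← Polynomial.monomial_one_one_eq_X, pN_monomial]
  calc _ ≤ 1 * c ^ 1 := Nat.mul_le_mul_right _ ν.one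
    _ = c := by simp

lemma poly_C (c : ℕ) (hc : 0 < c) (a : A) : (ν.poly c hc).N (Polynomial.C a) ≤ ν.N a := by
  change ν.pN c (Polynomial.C a) ≤ _
  rw [← Polynomial.monomial_zero_left, pN_monomial]
  simp

/-- Kronecker substitution -/
lemma kron (b : ℕ) (p : Polynomial A) (h : (ν.poly 1 Nat.one_pos).N p < b)
    (h0 : p.eval (b : A) = 0) : p = 0 := by
  induction hn : p.natDegree using Nat.strong_induction_on generalizing p with
  | _ n ih =>
  have hb : 0 < b := by omega
  have hp := Polynomial.divX_mul_X_add p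
  have hN : (ν.poly 1 Nat.one_pos).N p = (ν.poly 1 Nat.one_pos).N p.divX + ν.N (p.coeff 0) := by
    change ν.pN 1 p = ν.pN 1 p.divX + _
    rw [ν.pN_range 1 p (p.natDegree + 1 + 1) (by omega), Finset.sum_range_succ',
      ν.pN_range 1 p.divX (p.natDegree + 1) (by rw [Polynomial.natDegree_divX_eq_natDegree_tsub_one]; omega)]
    simp
  have he : p.eval (b : A) = p.divX.eval (b : A) * b + p.coeff 0 := by
    conv_lhs => rw [← hp]
    simp
  rw [he] at h0
  have h1 : p.coeff 0 = ((-b : ℤ) : A) * p.divX.eval (b : A) := by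
    push_cast
    linear_combination h0
  have h2 : ν.N (p.coeff 0) = b * ν.N (p.divX.eval (b : A)) := by
    rw [h1, ν.zsm]; simp
  have h3 : ν.N (p.divX.eval (b : A)) = 0 := by
    by_contra hne
    have : b * 1 ≤ b * ν.N (p.divX.eval (b : A)) := Nat.mul_le_mul_left _ (by omega)
    omega
  have h4 := ν.eq0 _ h3
  have h5 : p.coeff 0 = 0 := by rw [h1, h4, mul_zero]
  rw [h5, Polynomial.C_0, add_zero] at hp
  by_cases hd : p.natDegree = 0
  · rw [Polynomial.eq_C_of_natDegree_eq_zero hd, h5, Polynomial.C_0]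
  · have := ih p.divX.natDegree (by rw [Polynomial.natDegree_divX_eq_natDegree_tsub_one]; omega)
      p.divX (by omega) h4 rfl
    rw [← hp, this, zero_mul]

/-- interpolation on a grid -/
lemma grid [IsDomain A] (hA : ∀ m : ℕ, (m : A) = 0 → m = 0) (c : ℕ) (hc : 0 < c) (n : ℕ)
    (p : Polynomial A)
    (h : (ν.poly c hc).N p < c ^ n) (h0 : ∀ v < n, p.eval (v : A) = 0) : p = 0 := by
  by_contra hp
  have hd : p.natDegree < n := by
    by_contra hge
    push Not at hge
    have hl : p.coeff p.natDegree ≠ 0 := by simpa using hp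
    have hl' : 1 ≤ ν.N (p.coeff p.natDegree) := by
      rcases Nat.eq_zero_or_pos (ν.N (p.coeff p.natDegree)) with h | h
      · exact absurd (ν.eq0 _ h) hl
      · exact h
    have e : (ν.poly c hc).N p = ∑ i ∈ Finset.range (p.natDegree + 1), ν.N (p.coeff i) * c ^ i :=
      ν.pN_range c p _ (Nat.lt_succ_self _)
    rw [Finset.sum_range_succ] at e
    have : c ^ n ≤ c ^ p.natDegree := Nat.pow_le_pow_right hc hge
    have h2 : 1 * c ^ p.natDegree ≤ ν.N (p.coeff p.natDegree) * c ^ p.natDegree :=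
      Nat.mul_le_mul_right _ hl'
    omega
  apply hp
  have hinj : Function.Injective (fun v : Fin n => ((v : ℕ) : A)) := by
    have : CharZero A := charZero_of_inj_zero hA
    intro v w hvw
    have hvw' : ((v : ℕ) : A) = ((w : ℕ) : A) := hvw
    exact Fin.ext (by exact_mod_cast hvw')
  exact Polynomial.eq_zero_of_natDegree_lt_card_of_eval_eq_zero p hinj (fun v => h0 v v.2) (by simpa using hd)

/-! bounds -/

lemma bil_le (L : List (ℤ × ℕ × ℕ)) (f g : ℕ → A) (F G : ℕ → ℕ) (hf : ∀ i, ν.N (f i) ≤ F i)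
    (hg : ∀ i, ν.N (g i) ≤ G i) : ν.N (bil (ic A) L f g) ≤ bil Int.natAbs L F G := by
  unfold bil
  induction L with
  | nil => simp [ν.zero]
  | cons t L ih =>
    rw [List.map_cons, List.sum_cons, List.map_cons, List.sum_cons]
    refine (ν.add _ _).trans (Nat.add_le_add ?_ ih)
    exact (ν.mul _ _).trans (Nat.mul_le_mul ((ν.mul _ _).trans
      (Nat.mul_le_mul (ν.int _) (hf _))) (hg _))

lemma Jv_le (a : ℕ → A) (F : ℕ → ℕ) (h : ∀ i, ν.N (a i) ≤ F i) (i : ℕ) :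
    ν.N (Jv (ic A) a i) ≤ Jv Int.natAbs F i := by
  have hb : ∀ (LL) (f g : ℕ → A) (F G : ℕ → ℕ), (∀ i, ν.N (f i) ≤ F i) → (∀ i, ν.N (g i) ≤ G i) →
      ∀ o, ν.N (bop (ic A) LL f g o) ≤ bop Int.natAbs LL F G o :=
    fun LL f g F G hf hg o => ν.bil_le _ f g F G hf hg
  have hK : ∀ o, ν.N (vK (ic A) a o) ≤ vK Int.natAbs F o := hb _ _ _ _ _ h h
  have hG : ∀ o, ν.N (vG (ic A) a o) ≤ vG Int.natAbs F o := hb _ _ _ _ _ h h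
  have hH : ∀ o, ν.N (vH (ic A) a o) ≤ vH Int.natAbs F o := hb _ _ _ _ _ hK hK
  have hM : ∀ o, ν.N (vM (ic A) a o) ≤ vM Int.natAbs F o := hb _ _ _ _ _ h hK
  have hN : ∀ o, ν.N (vN (ic A) a o) ≤ vN Int.natAbs F o := hb _ _ _ _ _ h hH
  have hP : ∀ o, ν.N (vP (ic A) a o) ≤ vP Int.natAbs F o := hb _ _ _ _ _ hG hK
  have hQ : ∀ o, ν.N (vQ (ic A) a o) ≤ vQ Int.natAbs F o := hb _ _ _ _ _ hG hH
  rcases Nat.lt_or_ge i 9 with hi | hi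
  · interval_cases i
    · exact hb _ _ _ _ _ h h 0
    · exact hb _ _ _ _ _ h hG 0
    · exact hb _ _ _ _ _ hK hK 0
    · exact hb _ _ _ _ _ hM hK 0
    · exact hb _ _ _ _ _ hK hH 0
    · exact hb _ _ _ _ _ hM hH 0
    · exact hb _ _ _ _ _ hP hH 0
    · exact hb _ _ _ _ _ hN hH 0
    · exact hb _ _ _ _ _ hQ hH 0
  · obtain ⟨j, rfl⟩ := Nat.exists_eq_add_of_le' hi
    change ν.N 0 ≤ _
    rw [ν.zero]; exact Nat.zero_le _

lemma evR_le (L : List (ℤ × List ℕ)) (J : ℕ → A) (F : ℕ → ℕ) (h : ∀ i, ν.N (J i) ≤ F i) :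
    ν.N (evR (ic A) L J) ≤ evR Int.natAbs L F := by
  have key : ∀ l : List ℕ, ν.N ((l.map J).prod) ≤ (l.map F).prod := by
    intro l
    induction l with
    | nil => simpa using ν.one
    | cons x l ih =>
      rw [List.map_cons, List.prod_cons, List.map_cons, List.prod_cons]
      exact (ν.mul _ _).trans (Nat.mul_le_mul (h _) ih)
  unfold evR
  induction L with
  | nil => simp [ν.zero]
  | cons t L ih =>
    rw [List.map_cons, List.sum_cons, List.map_cons, List.sum_cons]
    exact (ν.add _ _).trans (Nat.add_le_add ((ν.mul _ _).trans
      (Nat.mul_le_mul (ν.int _) (key _))) ih)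

/-- combined bound -/
lemma rel_le (L : List (ℤ × List ℕ)) (a : ℕ → A) (F : ℕ → ℕ) (h : ∀ i, ν.N (a i) ≤ F i) :
    ν.N (evR (ic A) L (Jv (ic A) a)) ≤ evR Int.natAbs L (Jv Int.natAbs F) :=
  ν.evR_le L _ _ (ν.Jv_le a F h)

end Nrm

/-- the norm on the integers -/
def nrmZ : Nrm ℤ where
  N := Int.natAbs
  one := by simp
  add := Int.natAbs_add_le
  mul a b := (Int.natAbs_mul a b).le
  zsm z a := by simp [Int.natAbs_mul]
  eq0 a h := by simpa using h


/-! ### The four relations in degrees 16, 17, 18, 19 -/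

def rel16 : List (ℤ × List ℕ) := [(18225, [6, 6]), (-5953500, [5, 7]), (126000, [4, 8]), (-11907000, [3, 3, 4]),
  (192500, [2, 4, 4]), (17860500, [2, 3, 5]), (-263250, [2, 2, 6]), (-151875, [2, 2, 2, 2]),
  (-2381400, [1, 4, 5]), (1190700, [1, 2, 7]), (1190700, [1, 2, 2, 3]), (-54432, [1, 1, 8]),
  (393120, [1, 1, 2, 4]), (-16669800, [0, 5, 5]), (396900, [0, 4, 6]), (16669800, [0, 3, 7]),
  (-529200, [0, 2, 8]), (2327500, [0, 2, 2, 4]), (-592704, [0, 1, 1, 2, 2]), (-3601500, [0, 0, 2, 2, 2]),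
  (1382976, [0, 0, 0, 8]), (-9988160, [0, 0, 0, 2, 4]), (15059072, [0, 0, 0, 0, 2, 2])]
def rel17 : List (ℤ × List ℕ) := [(20250, [6, 7]), (-10125, [5, 8]), (17500, [3, 4, 4]), (-31875, [2, 4, 5]),
  (11250, [2, 2, 7]), (340200, [1, 5, 5]), (-4050, [1, 4, 6]), (-340200, [1, 3, 7]),
  (2025, [1, 2, 8]), (625, [1, 2, 2, 4]), (60480, [1, 1, 3, 4]), (-90720, [1, 1, 2, 5]),
  (6048, [1, 1, 1, 2, 2]), (-56700, [0, 5, 6]), (-196000, [0, 4, 7]), (28350, [0, 3, 8]),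
  (162750, [0, 2, 3, 4]), (-141750, [0, 2, 2, 5]), (36750, [0, 1, 2, 2, 2]), (84672, [0, 1, 1, 7]),
  (617400, [0, 0, 4, 5]), (205800, [0, 0, 2, 7]), (-308700, [0, 0, 2, 2, 3]), (-1536640, [0, 0, 0, 3, 4]),
  (2304960, [0, 0, 0, 2, 5]), (-153664, [0, 0, 0, 1, 2, 2]), (-2151296, [0, 0, 0, 0, 7])]
def rel18 : List (ℤ × List ℕ) := [(-2679075000, [7, 7]), (4100625, [6, 8]), (95703125, [4, 4, 4]), (-5358150000, [3, 4, 5]),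
  (119221875, [2, 4, 6]), (8037225000, [2, 3, 7]), (-61509375, [2, 2, 8]), (-113906250, [2, 2, 2, 4]),
  (-137781000, [1, 5, 6]), (-1012095000, [1, 4, 7]), (68890500, [1, 3, 8]), (-1033357500, [1, 2, 3, 4]),
  (2066715000, [1, 2, 2, 5]), (3638250, [1, 1, 4, 4]), (-36741600, [1, 1, 2, 6]), (-172226250, [1, 1, 2, 2, 2]),
  (205752960, [1, 1, 1, 7]), (73156608, [1, 1, 1, 1, 4]), (89302500, [0, 4, 8]), (7809375, [0, 2, 4, 4]),
  (-401861250, [0, 2, 2, 6]), (-1004653125, [0, 2, 2, 2, 2]), (1500282000, [0, 1, 4, 5]), (500094000, [0, 1, 2, 7]),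
  (-750141000, [0, 1, 2, 2, 3]), (1155772800, [0, 1, 1, 2, 4]), (21003948000, [0, 0, 5, 5]), (-250047000, [0, 0, 4, 6]),
  (-21003948000, [0, 0, 3, 7]), (125023500, [0, 0, 2, 8]), (4360387500, [0, 0, 2, 2, 4]), (373403520, [0, 0, 1, 1, 2, 2]),
  (-92438500, [0, 0, 0, 4, 4]), (933508800, [0, 0, 0, 2, 6]), (6644767500, [0, 0, 0, 2, 2, 2]), (-5227649280, [0, 0, 0, 1, 7]),
  (-3717439488, [0, 0, 0, 1, 1, 4]), (-29365190400, [0, 0, 0, 0, 2, 4]), (-9487215360, [0, 0, 0, 0, 0, 2, 2]), (47225249792, [0, 0, 0, 0, 0, 0, 4])]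
def rel19 : List (ℤ × List ℕ) := [(1620000, [7, 8]), (-2734375, [4, 4, 5]), (153090000, [3, 5, 5]), (-202500, [3, 4, 6]),
  (-153090000, [3, 3, 7]), (-3037500, [2, 5, 6]), (2475000, [2, 4, 7]), (3037500, [2, 2, 3, 4]),
  (-2278125, [2, 2, 2, 5]), (13608000, [1, 5, 7]), (-324000, [1, 4, 8]), (27216000, [1, 3, 3, 4]),
  (51875, [1, 2, 4, 4]), (-40824000, [1, 2, 3, 5]), (648000, [1, 2, 2, 6]), (-151875, [1, 2, 2, 2, 2]),
  (4838400, [1, 1, 4, 5]), (-2721600, [1, 1, 2, 7]), (2721600, [1, 1, 2, 2, 3]), (-967680, [1, 1, 1, 2, 4]),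
  (-3402000, [0, 5, 8]), (1286250, [0, 3, 4, 4]), (-7035000, [0, 2, 4, 5]), (6804000, [0, 2, 3, 6]),
  (2205000, [0, 2, 2, 7]), (31893750, [0, 2, 2, 2, 3]), (-38102400, [0, 1, 5, 5]), (453600, [0, 1, 4, 6]),
  (38102400, [0, 1, 3, 7]), (-226800, [0, 1, 2, 8]), (-5950000, [0, 1, 2, 2, 4]), (-20321280, [0, 1, 1, 3, 4]),
  (10160640, [0, 1, 1, 2, 5]), (-677376, [0, 1, 1, 1, 2, 2]), (6350400, [0, 0, 5, 6]), (71344000, [0, 0, 4, 7]),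
  (-3175200, [0, 0, 3, 8]), (-51156000, [0, 0, 2, 3, 4]), (-82908000, [0, 0, 2, 2, 5]), (-4116000, [0, 0, 1, 2, 2, 2]),
  (-9483264, [0, 0, 1, 1, 7]), (-192080000, [0, 0, 0, 4, 5]), (46099200, [0, 0, 0, 2, 7]), (-34574400, [0, 0, 0, 2, 2, 3]),
  (24586240, [0, 0, 0, 1, 2, 4]), (516311040, [0, 0, 0, 0, 3, 4]), (-258155520, [0, 0, 0, 0, 2, 5]), (17210368, [0, 0, 0, 0, 1, 2, 2]),
  (240945152, [0, 0, 0, 0, 0, 7])]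


/-! ### Forced evaluation of the relations at integer points -/

def nth (l : List ℤ) : ℕ → ℤ :=
  @List.rec ℤ (fun _ => ℕ → ℤ) (fun _ => 0)
    (fun x _ ih i => @Nat.rec (fun _ => ℤ) x (fun j _ => ih j) i) l

lemma nth_nil (i : ℕ) : nth [] i = 0 := rfl
lemma nth_zero (x : ℤ) (l : List ℤ) : nth (x :: l) 0 = x := rfl
lemma nth_succ (x : ℤ) (l : List ℤ) (i : ℕ) : nth (x :: l) (i + 1) = nth l i := rfl

/-- evaluate the number before passing it on -/
def frcN (n : ℕ) (f : ℕ → Bool) : Bool :=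
  @Nat.rec (fun _ => Bool) (f 0) (fun m _ => f (Nat.succ m)) n

def frc (z : ℤ) (f : ℤ → Bool) : Bool :=
  @Int.rec (fun _ => Bool) (fun n => frcN n fun m => f (Int.ofNat m))
    (fun n => frcN n fun m => f (Int.negSucc m)) z

lemma frcN_eq (n : ℕ) (f : ℕ → Bool) : frcN n f = f n := by cases n <;> rfl

lemma frc_eq (z : ℤ) (f : ℤ → Bool) : frc z f = f z := by
  cases z <;> simp [frc, frcN_eq]

def bilF (w : ℤ → ℤ) (f g : List ℤ) (L : List (ℤ × ℕ × ℕ)) : ℤ → (ℤ → Bool) → Bool :=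
  @List.rec (ℤ × ℕ × ℕ) (fun _ => ℤ → (ℤ → Bool) → Bool) (fun acc kk => kk acc)
    (fun t _ ih acc kk => frc (Int.mul (Int.mul (w t.1) (nth f t.2.1)) (nth g t.2.2)) fun v =>
      frc (Int.add acc v) fun s => ih s kk) L

lemma bilF_eq (w : ℤ → ℤ) (f g : List ℤ) (L : List (ℤ × ℕ × ℕ)) (acc : ℤ) (kk : ℤ → Bool) :
    bilF w f g L acc kk = kk (acc + bil w L (nth f) (nth g)) := by
  induction L generalizing acc with
  | nil => simp [bilF, bil]
  | cons t L ih =>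
    have e : bilF w f g (t :: L) acc kk = frc (w t.1 * nth f t.2.1 * nth g t.2.2) fun v =>
      frc (acc + v) fun s => bilF w f g L s kk := rfl
    rw [e, frc_eq, frc_eq, ih, bil, bil, List.map_cons, List.sum_cons, add_assoc]

def opF (w : ℤ → ℤ) (f g : List ℤ) (LL : List (List (ℤ × ℕ × ℕ))) : (List ℤ → Bool) → Bool :=
  @List.rec (List (ℤ × ℕ × ℕ)) (fun _ => (List ℤ → Bool) → Bool) (fun kk => kk [])
    (fun L _ ih kk => bilF w f g L 0 fun z => ih fun r => kk (z :: r)) LL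

lemma opF_eq (w : ℤ → ℤ) (f g : List ℤ) (LL : List (List (ℤ × ℕ × ℕ))) (kk : List ℤ → Bool) :
    opF w f g LL kk = kk (LL.map fun L => bil w L (nth f) (nth g)) := by
  induction LL generalizing kk with
  | nil => rfl
  | cons L LL ih => 
    have e : opF w f g (L :: LL) kk = bilF w f g L 0 fun z => opF w f g LL fun r => kk (z :: r) := rfl
    rw [e, bilF_eq, ih, zero_add, List.map_cons]

lemma nth_map (w : ℤ → ℤ) (f g : ℕ → ℤ) (LL : List (List (ℤ × ℕ × ℕ))) :
    nth (LL.map fun L => bil w L f g) = bop w LL f g := by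
  funext o
  unfold bop
  induction LL generalizing o with
  | nil => simp [nth_nil, bil]
  | cons L LL ih =>
    cases o with
    | zero => simp [nth_nil, nth_zero]
    | succ o => simp only [List.map_cons, nth_succ, ih, List.getD_cons_succ]

def prodF (J : List ℤ) (l : List ℕ) : ℤ → (ℤ → Bool) → Bool :=
  @List.rec ℕ (fun _ => ℤ → (ℤ → Bool) → Bool) (fun acc kk => kk acc)
    (fun i _ ih acc kk => frc (Int.mul acc (nth J i)) fun s => ih s kk) l

lemma prodF_eq (J : List ℤ) (l : List ℕ) (acc : ℤ) (kk : ℤ → Bool) :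
    prodF J l acc kk = kk (acc * (l.map (nth J)).prod) := by
  induction l generalizing acc with
  | nil => simp [prodF]
  | cons i l ih => 
    have e : prodF J (i :: l) acc kk = frc (acc * nth J i) fun s => prodF J l s kk := rfl
    rw [e, frc_eq, ih, List.map_cons, List.prod_cons, mul_assoc]

def evF (w : ℤ → ℤ) (J : List ℤ) (L : List (ℤ × List ℕ)) : ℤ → (ℤ → Bool) → Bool :=
  @List.rec (ℤ × List ℕ) (fun _ => ℤ → (ℤ → Bool) → Bool) (fun acc kk => kk acc)
    (fun t _ ih acc kk => prodF J t.2 (w t.1) fun v => frc (Int.add acc v) fun s => ih s kk) L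

lemma evF_eq (w : ℤ → ℤ) (J : List ℤ) (L : List (ℤ × List ℕ)) (acc : ℤ) (kk : ℤ → Bool) :
    evF w J L acc kk = kk (acc + evR w L (nth J)) := by
  induction L generalizing acc with
  | nil => simp [evF, evR]
  | cons t L ih => 
    have e : evF w J (t :: L) acc kk =
      prodF J t.2 (w t.1) fun v => frc (acc + v) fun s => evF w J L s kk := rfl
    rw [e, prodF_eq, frc_eq, ih, evR, evR, List.map_cons, List.sum_cons, add_assoc]

def JF (w : ℤ → ℤ) (a : List ℤ) (kk : List ℤ → Bool) : Bool :=
  opF w a a tK fun K => opF w a a tG fun G => opF w K K tH fun H =>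
  opF w a K tM fun M => opF w a H tM fun N => opF w G K tM fun P => opF w G H tM fun Q =>
  opF w a a tT fun j2 => opF w a G tT fun j3 => opF w K K tQ fun j4 => opF w M K tQ fun j5 =>
  opF w K H tQ fun j6 => opF w M H tQ fun j7 => opF w P H tQ fun j8 => opF w N H tQ fun j9 =>
  opF w Q H tQ fun j10 =>
    kk [nth j2 0, nth j3 0, nth j4 0, nth j5 0, nth j6 0, nth j7 0, nth j8 0, nth j9 0, nth j10 0]

lemma JF_eq (w : ℤ → ℤ) (a : List ℤ) (kk : List ℤ → Bool) :
    ∃ J : List ℤ, nth J = Jv w (nth a) ∧ JF w a kk = kk J := by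
  unfold JF
  simp only [opF_eq, nth_map]
  refine ⟨_, ?_, rfl⟩
  funext i
  rcases Nat.lt_or_ge i 9 with h | h
  · interval_cases i <;> rfl
  · obtain ⟨j, rfl⟩ := Nat.exists_eq_add_of_le' h
    rfl

/-- all relations in the list vanish at the integer point -/
def chk0 (Ls : List (List (ℤ × List ℕ))) (a : List ℤ) : Bool :=
  JF (fun z => z) a fun J => Ls.all fun L => evF (fun z => z) J L 0 fun z => decide (z = 0)

lemma chk0_spec {Ls : List (List (ℤ × List ℕ))} {a : List ℤ} (h : chk0 Ls a = true)
    {L : List (ℤ × List ℕ)} (hL : L ∈ Ls) : Zr L (nth a) := by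
  unfold chk0 at h
  obtain ⟨J, hJ, e⟩ := JF_eq (fun z => z) a
    (fun J => Ls.all fun L => evF (fun z => z) J L 0 fun z => decide (z = 0))
  rw [e, List.all_eq_true] at h
  have := h L hL
  rw [evF_eq, decide_eq_true_eq, zero_add, hJ] at this
  exact this

def absZ (z : ℤ) : ℤ := (z.natAbs : ℤ)

/-- the norm bound for all relations in the list -/
def chkN (Ls : List (List (ℤ × List ℕ))) (a : List ℤ) (B : ℕ) : Bool :=
  JF absZ a fun J => Ls.all fun L => evF absZ J L 0 fun z => decide (z < (B : ℤ))

lemma bil_natCast (L : List (ℤ × ℕ × ℕ)) (f g : ℕ → ℕ) :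
    bil absZ L (fun i => (f i : ℤ)) (fun i => (g i : ℤ)) = ((bil Int.natAbs L f g : ℕ) : ℤ) := by
  unfold bil
  induction L with
  | nil => simp
  | cons t L ih => simp only [List.map_cons, List.sum_cons, ih, Nat.cast_add, Nat.cast_mul]; rfl

lemma evR_natCast (L : List (ℤ × List ℕ)) (J : ℕ → ℕ) :
    evR absZ L (fun i => (J i : ℤ)) = ((evR Int.natAbs L J : ℕ) : ℤ) := by
  have key : ∀ l : List ℕ, (l.map fun i => (J i : ℤ)).prod = (((l.map J).prod : ℕ) : ℤ) := by
    intro l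
    induction l with
    | nil => simp
    | cons x l ih => simp only [List.map_cons, List.prod_cons, ih]; push_cast; ring
  unfold evR
  induction L with
  | nil => simp
  | cons t L ih => rw [List.map_cons, List.sum_cons, ih, List.map_cons, List.sum_cons, key, Nat.cast_add, Nat.cast_mul]; rfl

lemma Jv_natCast (a : ℕ → ℕ) : Jv absZ (fun i => (a i : ℤ)) = fun i => ((Jv Int.natAbs a i : ℕ) : ℤ) := by
  have hb : ∀ LL (f g : ℕ → ℕ), bop absZ LL (fun i => (f i : ℤ)) (fun i => (g i : ℤ)) =
      fun o => ((bop Int.natAbs LL f g o : ℕ) : ℤ) := fun LL f g => funext fun o => bil_natCast _ f g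
  funext i
  rcases Nat.lt_or_ge i 9 with h | h
  · interval_cases i <;>
    simp only [Jv, vN, vM, vP, vQ, vH, vK, vG, hb]
  · obtain ⟨j, rfl⟩ := Nat.exists_eq_add_of_le' h
    simp [Jv]

def nthN (l : List ℕ) (i : ℕ) : ℕ := l.getD i 0

def castL (l : List ℕ) : List ℤ := l.map Int.ofNat

lemma nth_cast (l : List ℕ) : nth (castL l) = fun i => (nthN l i : ℤ) := by
  funext i
  unfold nthN castL
  induction l generalizing i with
  | nil => simp [nth_nil, nth_zero]
  | cons x l ih =>
    cases i with
    | zero => simp [nth_nil, nth_zero]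
    | succ i => simp only [List.map_cons, nth_succ, ih, List.getD_cons_succ]

lemma chkN_spec {Ls : List (List (ℤ × List ℕ))} {a : List ℕ} {B : ℕ}
    (h : chkN Ls (castL a) B = true)
    {L : List (ℤ × List ℕ)} (hL : L ∈ Ls) : evR Int.natAbs L (Jv Int.natAbs (nthN a)) < B := by
  unfold chkN at h
  obtain ⟨J, hJ, e⟩ := JF_eq absZ (castL a)
    (fun J => Ls.all fun L => evF absZ J L 0 fun z => decide (z < (B : ℤ)))
  rw [e, List.all_eq_true] at h
  have := h L hL
  rw [evF_eq, decide_eq_true_eq, zero_add, hJ, nth_cast, Jv_natCast, evR_natCast] at this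
  exact_mod_cast this


/-- product of the ratios of a monomial -/
def ratp (l : List ℕ) : ℕ := (l.map fun i => rat.getD i 1).prod

/-- rewrite a relation in terms of the scaled invariants -/
def hatR (D : ℕ) (L : List (ℤ × List ℕ)) : List (ℤ × List ℕ) :=
  L.map fun t => (t.1 * ((D / ratp t.2 : ℕ) : ℤ), t.2)

def hats : List (List (ℤ × List ℕ)) :=
  [hatR 442368 rel16, hatR 442368 rel17, hatR 5308416 rel18, hatR 1769472 rel19]



/-! ### The relations on the slice -/

section tower
open Polynomial (evalRingHom)

/-- a point of the slice -/
def pt {R : Type*} [CommRing R] (x1 x2 x3 x6 x7 : R) : ℕ → R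
  | 1 => x1
  | 2 => x2
  | 3 => x3
  | 4 => 1
  | 5 => 1
  | 6 => x6
  | 7 => x7
  | _ => 0

lemma pt_hom {R S : Type*} [CommRing R] [CommRing S] (φ : R →+* S) (x1 x2 x3 x6 x7 : R) :
    (fun i => φ (pt x1 x2 x3 x6 x7 i)) = pt (φ x1) (φ x2) (φ x3) (φ x6) (φ x7) := by
  funext i
  rcases Nat.lt_or_ge i 8 with h | h
  · interval_cases i <;> simp [pt]
  · obtain ⟨j, rfl⟩ := Nat.exists_eq_add_of_le' h
    simp [pt]

lemma pt_le {A : Type*} [CommRing A] (ν : Nrm A) {x1 x2 x3 x6 x7 : A} {f1 f2 f3 f6 f7 : ℕ}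
    (h1 : ν.N x1 ≤ f1) (h2 : ν.N x2 ≤ f2) (h3 : ν.N x3 ≤ f3) (h6 : ν.N x6 ≤ f6) (h7 : ν.N x7 ≤ f7)
    (i : ℕ) : ν.N (pt x1 x2 x3 x6 x7 i) ≤ nthN [0, f1, f2, f3, 1, 1, f6, f7, 0] i := by
  rcases Nat.lt_or_ge i 8 with h | h
  · interval_cases i
    · exact ν.zero.le
    · exact h1
    · exact h2
    · exact h3
    · exact ν.one
    · exact ν.one
    · exact h6
    · exact h7
  · obtain ⟨j, rfl⟩ := Nat.exists_eq_add_of_le' h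
    exact ν.zero.le.trans (Nat.zero_le _)

lemma kstep {A : Type*} [CommRing A] (ν : Nrm A) (L : List (ℤ × List ℕ)) (b : ℕ)
    {x1 x2 x3 x6 x7 : Polynomial A} {f1 f2 f3 f6 f7 : ℕ}
    (h1 : (ν.poly 1 Nat.one_pos).N x1 ≤ f1) (h2 : (ν.poly 1 Nat.one_pos).N x2 ≤ f2)
    (h3 : (ν.poly 1 Nat.one_pos).N x3 ≤ f3) (h6 : (ν.poly 1 Nat.one_pos).N x6 ≤ f6)
    (h7 : (ν.poly 1 Nat.one_pos).N x7 ≤ f7)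
    (hb : evR Int.natAbs L (Jv Int.natAbs (nthN [0, f1, f2, f3, 1, 1, f6, f7, 0])) < b)
    (h0 : Zr L (pt (evalRingHom (b : A) x1) (evalRingHom (b : A) x2) (evalRingHom (b : A) x3)
      (evalRingHom (b : A) x6) (evalRingHom (b : A) x7))) : Zr L (pt x1 x2 x3 x6 x7) := by
  refine ν.kron b _ (lt_of_le_of_lt ((ν.poly 1 Nat.one_pos).rel_le L _ _
    (pt_le _ h1 h2 h3 h6 h7)) hb) ?_
  change evalRingHom (b : A) _ = 0
  rw [evR_hom]
  simp only [Jv_hom]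
  rw [pt_hom]
  exact h0

lemma gstep {A : Type*} [CommRing A] [IsDomain A] (hA : ∀ m : ℕ, (m : A) = 0 → m = 0)
    (ν : Nrm A) (L : List (ℤ × List ℕ)) (c : ℕ) (hc : 0 < c) (n : ℕ)
    {x1 x2 x3 x6 x7 : Polynomial A} {f1 f2 f3 f6 f7 : ℕ}
    (h1 : (ν.poly c hc).N x1 ≤ f1) (h2 : (ν.poly c hc).N x2 ≤ f2)
    (h3 : (ν.poly c hc).N x3 ≤ f3) (h6 : (ν.poly c hc).N x6 ≤ f6)
    (h7 : (ν.poly c hc).N x7 ≤ f7)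
    (hb : evR Int.natAbs L (Jv Int.natAbs (nthN [0, f1, f2, f3, 1, 1, f6, f7, 0])) < c ^ n)
    (h0 : ∀ v < n, Zr L (pt (evalRingHom (v : A) x1) (evalRingHom (v : A) x2)
      (evalRingHom (v : A) x3) (evalRingHom (v : A) x6) (evalRingHom (v : A) x7))) :
    Zr L (pt x1 x2 x3 x6 x7) := by
  refine ν.grid hA c hc n _ (lt_of_le_of_lt ((ν.poly c hc).rel_le L _ _
    (pt_le _ h1 h2 h3 h6 h7)) hb) fun v hv => ?_
  change evalRingHom (v : A) _ = 0
  rw [evR_hom]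
  simp only [Jv_hom]
  rw [pt_hom]
  exact h0 v hv

lemma natP {A : Type*} [CommRing A] (hA : ∀ m : ℕ, (m : A) = 0 → m = 0) (m : ℕ)
    (h : (m : Polynomial A) = 0) : m = 0 := by
  apply hA
  have := congrArg (Polynomial.eval 0) h
  simpa using this

lemma glast {A : Type*} [CommRing A] [IsDomain A] (hA : ∀ m : ℕ, (m : A) = 0 → m = 0)
    (ν : Nrm A) (L : List (ℤ × List ℕ)) (c : ℕ) (hc : 0 < c)
    {x2 x3 x6 x7 : A} (h2 : ν.N x2 ≤ 1) (h3 : ν.N x3 ≤ 1) (h6 : ν.N x6 ≤ 1) (h7 : ν.N x7 ≤ 1)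
    (n1 : evR Int.natAbs L (Jv Int.natAbs (nthN [0, c, 1, 1, 1, 1, 1, 1, 0])) < c ^ 10)
    (h0 : ∀ v : ℕ, v < 10 → Zr L (pt (v : A) x2 x3 x6 x7)) {R : Type*} [CommRing R] (φ : A →+* R) (y1 : R) :
    Zr L (pt y1 (φ x2) (φ x3) (φ x6) (φ x7)) := by
  have h : Zr L (pt Polynomial.X (Polynomial.C x2) (Polynomial.C x3) (Polynomial.C x6)
      (Polynomial.C x7)) := by
    refine gstep hA ν L c hc 10 (ν.poly_X c hc) ((ν.poly_C _ _ _).trans h2)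
      ((ν.poly_C _ _ _).trans h3) ((ν.poly_C _ _ _).trans h6) ((ν.poly_C _ _ _).trans h7) n1 ?_
    intro v hv
    simpa using h0 v hv
  have := Zr_hom (Polynomial.eval₂RingHom φ y1) L _ h
  rw [pt_hom] at this
  simpa using this

lemma lev4 {A : Type*} [CommRing A] [IsDomain A] (hA : ∀ m : ℕ, (m : A) = 0 → m = 0)
    (ν : Nrm A) (L : List (ℤ × List ℕ)) (c : ℕ) (hc : 0 < c)
    {x2 x3 x6 : A} (h2 : ν.N x2 ≤ 1) (h3 : ν.N x3 ≤ 1) (h6 : ν.N x6 ≤ 1)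
    (n7 : evR Int.natAbs L (Jv Int.natAbs (nthN [0, 9, 1, 1, 1, 1, 1, c, 0])) < c ^ 10)
    (n1 : evR Int.natAbs L (Jv Int.natAbs (nthN [0, c, 1, 1, 1, 1, 1, 1, 0])) < c ^ 10)
    (h0 : ∀ v v' : ℕ, v < 10 → v' < 10 → Zr L (pt (v : A) x2 x3 x6 (v' : A)))
    {R : Type*} [CommRing R] (φ : A →+* R) (y1 y7 : R) :
    Zr L (pt y1 (φ x2) (φ x3) (φ x6) y7) := by
  have h : ∀ v : ℕ, v < 10 → Zr L (pt (v : Polynomial A) (Polynomial.C x2) (Polynomial.C x3)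
      (Polynomial.C x6) Polynomial.X) := by
    intro v hv
    refine gstep hA ν L c hc 10 (((ν.poly c hc).nat _).trans (Nat.le_of_lt_succ hv))
      ((ν.poly_C _ _ _).trans h2) ((ν.poly_C _ _ _).trans h3) ((ν.poly_C _ _ _).trans h6)
      (ν.poly_X _ _) n7 ?_
    intro v' hv'
    simpa using h0 v v' hv hv'
  have := glast (natP hA) (ν.poly 1 Nat.one_pos) L c hc ((ν.poly_C _ _ _).trans h2)
    ((ν.poly_C _ _ _).trans h3) ((ν.poly_C _ _ _).trans h6) (ν.poly_X _ _) n1 h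
    (Polynomial.eval₂RingHom φ y7) y1
  simpa using this

lemma lev3 {A : Type*} [CommRing A] [IsDomain A] (hA : ∀ m : ℕ, (m : A) = 0 → m = 0)
    (ν : Nrm A) (L : List (ℤ × List ℕ)) (c b2 : ℕ) (hc : 0 < c)
    {x3 x6 : A} (h3 : ν.N x3 ≤ 1) (h6 : ν.N x6 ≤ 1)
    (n2 : evR Int.natAbs L (Jv Int.natAbs (nthN [0, 9, 1, 1, 1, 1, 1, 9, 0])) < b2)
    (n7 : evR Int.natAbs L (Jv Int.natAbs (nthN [0, 9, 1, 1, 1, 1, 1, c, 0])) < c ^ 10)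
    (n1 : evR Int.natAbs L (Jv Int.natAbs (nthN [0, c, 1, 1, 1, 1, 1, 1, 0])) < c ^ 10)
    (h0 : ∀ v v' : ℕ, v < 10 → v' < 10 → Zr L (pt (v : A) (b2 : A) x3 x6 (v' : A)))
    {R : Type*} [CommRing R] (φ : A →+* R) (y1 y2 y7 : R) :
    Zr L (pt y1 y2 (φ x3) (φ x6) y7) := by
  have h : ∀ v v' : ℕ, v < 10 → v' < 10 → Zr L (pt (v : Polynomial A) Polynomial.X
      (Polynomial.C x3) (Polynomial.C x6) (v' : Polynomial A)) := by
    intro v v' hv hv'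
    refine kstep ν L b2 (((ν.poly _ _).nat _).trans (Nat.le_of_lt_succ hv)) (ν.poly_X _ _)
      ((ν.poly_C _ _ _).trans h3) ((ν.poly_C _ _ _).trans h6)
      (((ν.poly _ _).nat _).trans (Nat.le_of_lt_succ hv')) n2 ?_
    simpa using h0 v v' hv hv'
  have := lev4 (natP hA) (ν.poly 1 Nat.one_pos) L c hc (ν.poly_X _ _)
    ((ν.poly_C _ _ _).trans h3) ((ν.poly_C _ _ _).trans h6) n7 n1 h
    (Polynomial.eval₂RingHom φ y2) y1 y7
  simpa using this

lemma lev2 {A : Type*} [CommRing A] [IsDomain A] (hA : ∀ m : ℕ, (m : A) = 0 → m = 0)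
    (ν : Nrm A) (L : List (ℤ × List ℕ)) (c b2 b3 : ℕ) (hc : 0 < c)
    {x6 : A} (h6 : ν.N x6 ≤ 1)
    (n3 : evR Int.natAbs L (Jv Int.natAbs (nthN [0, 9, b2, 1, 1, 1, 1, 9, 0])) < b3)
    (n2 : evR Int.natAbs L (Jv Int.natAbs (nthN [0, 9, 1, 1, 1, 1, 1, 9, 0])) < b2)
    (n7 : evR Int.natAbs L (Jv Int.natAbs (nthN [0, 9, 1, 1, 1, 1, 1, c, 0])) < c ^ 10)
    (n1 : evR Int.natAbs L (Jv Int.natAbs (nthN [0, c, 1, 1, 1, 1, 1, 1, 0])) < c ^ 10)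
    (h0 : ∀ v v' : ℕ, v < 10 → v' < 10 → Zr L (pt (v : A) (b2 : A) (b3 : A) x6 (v' : A)))
    {R : Type*} [CommRing R] (φ : A →+* R) (y1 y2 y3 y7 : R) :
    Zr L (pt y1 y2 y3 (φ x6) y7) := by
  have h : ∀ v v' : ℕ, v < 10 → v' < 10 → Zr L (pt (v : Polynomial A) (b2 : Polynomial A)
      Polynomial.X (Polynomial.C x6) (v' : Polynomial A)) := by
    intro v v' hv hv'
    refine kstep ν L b3 (((ν.poly _ _).nat _).trans (Nat.le_of_lt_succ hv)) ((ν.poly _ _).nat _)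
      (ν.poly_X _ _) ((ν.poly_C _ _ _).trans h6)
      (((ν.poly _ _).nat _).trans (Nat.le_of_lt_succ hv')) n3 ?_
    simpa using h0 v v' hv hv'
  have := lev3 (natP hA) (ν.poly 1 Nat.one_pos) L c b2 hc (ν.poly_X _ _)
    ((ν.poly_C _ _ _).trans h6) n2 n7 n1 h
    (Polynomial.eval₂RingHom φ y3) y1 y2 y7
  simpa using this

lemma tower (L : List (ℤ × List ℕ)) (b2 b3 b6 c : ℕ) (hc : 0 < c)
    (h0 : ∀ v v' : ℕ, v < 10 → v' < 10 → Zr L (pt (v : ℤ) b2 b3 b6 v'))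
    (n6 : evR Int.natAbs L (Jv Int.natAbs (nthN [0, 9, b2, b3, 1, 1, 1, 9, 0])) < b6)
    (n3 : evR Int.natAbs L (Jv Int.natAbs (nthN [0, 9, b2, 1, 1, 1, 1, 9, 0])) < b3)
    (n2 : evR Int.natAbs L (Jv Int.natAbs (nthN [0, 9, 1, 1, 1, 1, 1, 9, 0])) < b2)
    (n7 : evR Int.natAbs L (Jv Int.natAbs (nthN [0, 9, 1, 1, 1, 1, 1, c, 0])) < c ^ 10)
    (n1 : evR Int.natAbs L (Jv Int.natAbs (nthN [0, c, 1, 1, 1, 1, 1, 1, 0])) < c ^ 10)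
    {R : Type*} [CommRing R] (x1 x2 x3 x6 x7 : R) : Zr L (pt x1 x2 x3 x6 x7) := by
  have hA : ∀ m : ℕ, (m : ℤ) = 0 → m = 0 := fun m h => by exact_mod_cast h
  have h : ∀ v v' : ℕ, v < 10 → v' < 10 → Zr L (pt (v : Polynomial ℤ) (b2 : Polynomial ℤ)
      (b3 : Polynomial ℤ) Polynomial.X (v' : Polynomial ℤ)) := by
    intro v v' hv hv'
    refine kstep nrmZ L b6 (((nrmZ.poly _ _).nat _).trans (Nat.le_of_lt_succ hv))
      ((nrmZ.poly _ _).nat _) ((nrmZ.poly _ _).nat _) (nrmZ.poly_X _ _)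
      (((nrmZ.poly _ _).nat _).trans (Nat.le_of_lt_succ hv')) n6 ?_
    simpa using h0 v v' hv hv'
  have := lev2 (natP hA) (nrmZ.poly 1 Nat.one_pos) L c b2 b3 hc (nrmZ.poly_X _ _)
    n3 n2 n7 n1 h (Polynomial.eval₂RingHom (Int.castRingHom R) x6) x1 x2 x3 x7
  simpa using this

lemma tor_norm {F : Type*} [Field F] {p q : F} (hp : p ≠ 0) (hq : q ≠ 0) :
    ∃ s u : F, s ≠ 0 ∧ u ≠ 0 ∧ s * u ^ 4 * p = 1 ∧ s * u ^ 5 * q = 1 := by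
  refine ⟨q ^ 4 / p ^ 5, p / q, ?_, ?_, ?_, ?_⟩
  · exact div_ne_zero (pow_ne_zero _ hq) (pow_ne_zero _ hp)
  · exact div_ne_zero hp hq
  · field_simp
  · field_simp

/-- the general slice point -/
lemma Zr_slice0 {d : ℕ} {L : List (ℤ × List ℕ)} (hd : homR d L = true)
    (h : ∀ {R : Type} [CommRing R] (x1 x2 x3 x6 x7 : R), Zr L (pt x1 x2 x3 x6 x7))
    {S : Type*} [CommRing S] (a : ℕ → S) (a0 : a 0 = 0) (a8 : a 8 = 0) : Zr L a := by
  let M := MvPolynomial (Fin 9) ℤ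
  let F := FractionRing M
  let x : ℕ → M := fun i => if h : 1 ≤ i ∧ i < 8 then X ⟨i, by omega⟩ else 0
  have hinj : Function.Injective (algebraMap M F) := IsFractionRing.injective M F
  have hx : ∀ i, 1 ≤ i → i < 8 → algebraMap M F (x i) ≠ 0 := by
    intro i h1 h8
    rw [Ne, map_eq_zero_iff _ hinj]
    simp only [x, dif_pos (And.intro h1 h8)]
    exact X_ne_zero _
  have key : Zr L x := by
    apply Zr_of_inj (algebraMap M F) hinj
    set y : ℕ → F := fun i => algebraMap M F (x i) with hy
    have y4 : y 4 ≠ 0 := hx 4 (by norm_num) (by norm_num)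
    have y5 : y 5 ≠ 0 := hx 5 (by norm_num) (by norm_num)
    obtain ⟨s, u, hs0, hu0, e4, e5⟩ := tor_norm y4 y5
    rw [← Zr_tor hd hs0 hu0]
    have e : tor s u y = pt (tor s u y 1) (tor s u y 2) (tor s u y 3) (tor s u y 6) (tor s u y 7) := by
      funext i
      rcases Nat.lt_or_ge i 8 with h | h
      · interval_cases i
        · simp [tor, pt, hy, x]
        · rfl
        · rfl
        · rfl
        · exact e4
        · exact e5
        · rfl
        · rfl
      · obtain ⟨j, rfl⟩ := Nat.exists_eq_add_of_le' h
        simp [tor, pt, hy, x]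
    rw [e]
    exact h _ _ _ _ _
  have h2 := Zr_hom (eval₂Hom (Int.castRingHom S) (fun i : Fin 9 => a i)) L x key
  unfold Zr at *
  rw [← Jv_cut a]
  convert h2 using 3
  funext i
  unfold cut
  rcases Nat.lt_or_ge i 9 with h | h
  · interval_cases i <;> simp [x, a0, a8]
  · rw [if_neg (by omega)]
    simp [x, show ¬ (i < 8) by omega]

/-- from the slice to all octavics -/
lemma Zr_all {d : ℕ} {L : List (ℤ × List ℕ)} (hd : homR d L = true)
    (h : ∀ {R : Type} [CommRing R] (x1 x2 x3 x6 x7 : R), Zr L (pt x1 x2 x3 x6 x7))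
    {K : Type*} [Field K] (a : ℕ → K) : Zr L a := by
  apply Zr_of_inj (algebraMap K (AlgebraicClosure K)) (algebraMap K (AlgebraicClosure K)).injective
  exact Zr_slice hd (fun a a0 a8 => Zr_slice0 hd h a a0 a8) _

end tower


/-! ### Numerical verification -/

def gchk (b2 b3 b6 v : ℕ) : Bool :=
  frcN b2 fun b2 => frcN b3 fun b3 => frcN b6 fun b6 => (List.range 10).all fun v' => 
    chk0 hats [0, (v : ℤ), (b2 : ℤ), (b3 : ℤ), 1, 1, (b6 : ℤ), (v' : ℤ), 0]

lemma nth_pt (v b2 b3 b6 v' : ℤ) : nth [0, v, b2, b3, 1, 1, b6, v', 0] = pt v b2 b3 b6 v' := by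
  funext i
  rcases Nat.lt_or_ge i 9 with h | h
  · interval_cases i <;> rfl
  · obtain ⟨j, rfl⟩ := Nat.exists_eq_add_of_le' h
    rfl

lemma gchk_spec {b2 b3 b6 v : ℕ} (h : gchk b2 b3 b6 v = true) {L : List (ℤ × List ℕ)}
    (hL : L ∈ hats) (v' : ℕ) (hv' : v' < 10) : Zr L (pt (v : ℤ) b2 b3 b6 v') := by
  unfold gchk at h
  rw [frcN_eq, frcN_eq, frcN_eq, List.all_eq_true] at h
  rw [← nth_pt]
  exact chk0_spec (h v' (List.mem_range.2 hv')) hL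

lemma gr0 : gchk (2 ^ 166) (2 ^ 1950) (2 ^ 27404) 0 = true := by decide +kernel
lemma gr1 : gchk (2 ^ 166) (2 ^ 1950) (2 ^ 27404) 1 = true := by decide +kernel
lemma gr2 : gchk (2 ^ 166) (2 ^ 1950) (2 ^ 27404) 2 = true := by decide +kernel
lemma gr3 : gchk (2 ^ 166) (2 ^ 1950) (2 ^ 27404) 3 = true := by decide +kernel
lemma gr4 : gchk (2 ^ 166) (2 ^ 1950) (2 ^ 27404) 4 = true := by decide +kernel
lemma gr5 : gchk (2 ^ 166) (2 ^ 1950) (2 ^ 27404) 5 = true := by decide +kernel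
lemma gr6 : gchk (2 ^ 166) (2 ^ 1950) (2 ^ 27404) 6 = true := by decide +kernel
lemma gr7 : gchk (2 ^ 166) (2 ^ 1950) (2 ^ 27404) 7 = true := by decide +kernel
lemma gr8 : gchk (2 ^ 166) (2 ^ 1950) (2 ^ 27404) 8 = true := by decide +kernel
lemma gr9 : gchk (2 ^ 166) (2 ^ 1950) (2 ^ 27404) 9 = true := by decide +kernel

lemma bn6 : chkN hats (castL [0, 9, 2 ^ 166, 2 ^ 1950, 1, 1, 1, 9, 0]) (2 ^ 27404) = true := by
  decide +kernel
lemma bn3 : chkN hats (castL [0, 9, 2 ^ 166, 1, 1, 1, 1, 9, 0]) (2 ^ 1950) = true := by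
  decide +kernel
lemma bn2 : chkN hats (castL [0, 9, 1, 1, 1, 1, 1, 9, 0]) (2 ^ 166) = true := by
  decide +kernel
lemma bn7 : chkN hats (castL [0, 9, 1, 1, 1, 1, 1, 2 ^ 200, 0]) ((2 ^ 200) ^ 10) = true := by
  decide +kernel
lemma bn1 : chkN hats (castL [0, 2 ^ 200, 1, 1, 1, 1, 1, 1, 0]) ((2 ^ 200) ^ 10) = true := by
  decide +kernel

/-- abstract version, to keep the large numbers out of sight -/
lemma hats_pt_aux {b2 b3 b6 c : ℕ} (hc : 0 < c) (g0 : gchk b2 b3 b6 0 = true)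
    (g1 : gchk b2 b3 b6 1 = true) (g2 : gchk b2 b3 b6 2 = true) (g3 : gchk b2 b3 b6 3 = true)
    (g4 : gchk b2 b3 b6 4 = true) (g5 : gchk b2 b3 b6 5 = true) (g6 : gchk b2 b3 b6 6 = true)
    (g7 : gchk b2 b3 b6 7 = true) (g8 : gchk b2 b3 b6 8 = true) (g9 : gchk b2 b3 b6 9 = true)
    (n6 : chkN hats (castL [0, 9, b2, b3, 1, 1, 1, 9, 0]) b6 = true)
    (n3 : chkN hats (castL [0, 9, b2, 1, 1, 1, 1, 9, 0]) b3 = true)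
    (n2 : chkN hats (castL [0, 9, 1, 1, 1, 1, 1, 9, 0]) b2 = true)
    (n7 : chkN hats (castL [0, 9, 1, 1, 1, 1, 1, c, 0]) (c ^ 10) = true)
    (n1 : chkN hats (castL [0, c, 1, 1, 1, 1, 1, 1, 0]) (c ^ 10) = true)
    {L : List (ℤ × List ℕ)} (hL : L ∈ hats)
    {R : Type*} [CommRing R] (x1 x2 x3 x6 x7 : R) : Zr L (pt x1 x2 x3 x6 x7) := by
  refine tower L b2 b3 b6 c hc ?_ (chkN_spec n6 hL) (chkN_spec n3 hL) (chkN_spec n2 hL)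
    (chkN_spec n7 hL) (chkN_spec n1 hL) x1 x2 x3 x6 x7
  intro v v' hv hv'
  refine gchk_spec ?_ hL v' hv'
  interval_cases v
  · exact g0
  · exact g1
  · exact g2
  · exact g3
  · exact g4
  · exact g5
  · exact g6
  · exact g7
  · exact g8
  · exact g9

lemma c200 : 0 < 2 ^ 200 := by positivity

lemma hats_pt {L : List (ℤ × List ℕ)} (hL : L ∈ hats)
    {R : Type*} [CommRing R] (x1 x2 x3 x6 x7 : R) : Zr L (pt x1 x2 x3 x6 x7) :=
  hats_pt_aux c200 gr0 gr1 gr2 gr3 gr4 gr5 gr6 gr7 gr8 gr9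
    bn6 bn3 bn2 bn7 bn1 hL x1 x2 x3 x6 x7


/-! ### Relations between the invariants -/

lemma evR_hat {R : Type*} [CommRing R] (D : ℕ) (L : List (ℤ × List ℕ))
    (h : L.all (fun t => decide (D / ratp t.2 * ratp t.2 = D)) = true) (J : ℕ → R) :
    evR (ic R) (hatR D L) (fun i => ((rat.getD i 1 : ℕ) : R) * J i) = (D : R) * evR (ic R) L J := by
  have key : ∀ l : List ℕ, (l.map fun i => ((rat.getD i 1 : ℕ) : R) * J i).prod =
      ((ratp l : ℕ) : R) * (l.map J).prod := by
    intro l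
    unfold ratp
    induction l with
    | nil => simp
    | cons x l ih =>
      rw [List.map_cons, List.prod_cons, ih, List.map_cons, List.prod_cons, List.map_cons,
        List.prod_cons]
      push_cast; ring
  unfold evR hatR
  induction L with
  | nil => simp
  | cons t L ih =>
    simp only [List.all_cons, Bool.and_eq_true, decide_eq_true_eq] at h
    rw [List.map_cons, List.map_cons, List.sum_cons, ih h.2, List.map_cons, List.sum_cons, key,
      mul_add]
    have e : ((D / ratp t.2 : ℕ) : R) * ((ratp t.2 : ℕ) : R) = (D : R) := by
      rw [← Nat.cast_mul, h.1]
    congr 1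
    unfold ic
    rw [Int.cast_mul, Int.cast_natCast, ← e]; ring

/-- the vector of invariants -/
def Jx (a : Fin 9 → k) (i : ℕ) : k := Jinv (i + 2) a

lemma rel_true (H : Good k) {d D : ℕ} {L : List (ℤ × List ℕ)} (hL : hatR D L ∈ hats)
    (hd : homR d (hatR D L) = true)
    (h : L.all (fun t => decide (D / ratp t.2 * ratp t.2 = D)) = true)
    (hD : (D : k) ≠ 0) (a : Fin 9 → k) : evR (ic k) L (Jx a) = 0 := by
  have h1 : Zr (hatR D L) (ext9 a) := Zr_all hd (fun x1 x2 x3 x6 x7 => hats_pt hL x1 x2 x3 x6 x7) _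
  unfold Zr at h1
  have e : Jv (ic k) (ext9 a) = fun i => ((rat.getD i 1 : ℕ) : k) * Jx a i := by
    funext i
    rcases Nat.lt_or_ge i 9 with hi | hi
    · exact (J_eq H a i hi).symm
    · obtain ⟨j, rfl⟩ := Nat.exists_eq_add_of_le' hi
      change (0 : k) = _ * 0
      rw [mul_zero]
  rw [e, evR_hat D L h] at h1
  exact (mul_eq_zero.1 h1).resolve_left hD

lemma rt16 (H : Good k) (a : Fin 9 → k) : evR (ic k) rel16 (Jx a) = 0 :=
  rel_true H (d := 16) (D := 442368) (by unfold hats; simp only [List.mem_cons, true_or, or_true])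
    (by decide +kernel) (by decide +kernel) (H.ne 14 3 0 0 (by norm_num)) a
lemma rt17 (H : Good k) (a : Fin 9 → k) : evR (ic k) rel17 (Jx a) = 0 :=
  rel_true H (d := 17) (D := 442368) (by unfold hats; simp only [List.mem_cons, true_or, or_true])
    (by decide +kernel) (by decide +kernel) (H.ne 14 3 0 0 (by norm_num)) a
lemma rt18 (H : Good k) (a : Fin 9 → k) : evR (ic k) rel18 (Jx a) = 0 :=
  rel_true H (d := 18) (D := 5308416) (by unfold hats; simp only [List.mem_cons, true_or, or_true])
    (by decide +kernel) (by decide +kernel) (H.ne 16 4 0 0 (by norm_num)) a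
lemma rt19 (H : Good k) (a : Fin 9 → k) : evR (ic k) rel19 (Jx a) = 0 :=
  rel_true H (d := 19) (D := 1769472) (by unfold hats; simp only [List.mem_cons, true_or, or_true])
    (by decide +kernel) (by decide +kernel) (H.ne 16 3 0 0 (by norm_num)) a


/-! ### Sparse polynomials and elimination of `J_9`, `J_10` -/

/-- terms: monomial code (a product of primes) and coefficient -/
abbrev Ply := List (ℕ × ℤ)

def evP {R : Type*} [CommRing R] (v : ℕ →* R) (l : Ply) : R := (l.map fun t => (t.2 : R) * v t.1).sum

section evP
variable {R : Type*} [CommRing R] (v : ℕ →* R)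
lemma evP_nil : evP v [] = 0 := rfl
lemma evP_cons (t : ℕ × ℤ) (l : Ply) : evP v (t :: l) = (t.2 : R) * v t.1 + evP v l := by
  simp [evP]
end evP

def addF (a : Ply) : Ply → (Ply → Bool) → Bool :=
  @List.rec (ℕ × ℤ) (fun _ => Ply → (Ply → Bool) → Bool) (fun b kk => kk b)
    (fun x xs ih b => @List.rec (ℕ × ℤ) (fun _ => (Ply → Bool) → Bool) (fun kk => kk (x :: xs))
      (fun y ys ih2 kk => @Bool.rec (fun _ => Bool)
        (@Bool.rec (fun _ => Bool)
          (frc (Int.add x.2 y.2) fun s => @Bool.rec (fun _ => Bool)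
            (ih ys fun r => kk ((x.1, s) :: r)) (ih ys kk) (decide (s = 0)))
          (ih (y :: ys) fun r => kk (x :: r)) (Nat.blt y.1 x.1))
        (ih2 fun r => kk (y :: r)) (Nat.blt x.1 y.1)) b) a

def pAdd (a : Ply) : Ply → Ply :=
  @List.rec (ℕ × ℤ) (fun _ => Ply → Ply) (fun b => b)
    (fun x xs ih b => @List.rec (ℕ × ℤ) (fun _ => Ply) (x :: xs)
      (fun y ys ih2 => bif Nat.blt x.1 y.1 then y :: ih2 else bif Nat.blt y.1 x.1 then
        x :: ih (y :: ys) else bif decide (x.2 + y.2 = 0) then ih ys else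
        (x.1, x.2 + y.2) :: ih ys) b) a

lemma pAdd_cons (x y : ℕ × ℤ) (xs ys : Ply) : pAdd (x :: xs) (y :: ys) =
    bif Nat.blt x.1 y.1 then y :: pAdd (x :: xs) ys else bif Nat.blt y.1 x.1 then
        x :: pAdd xs (y :: ys) else bif decide (x.2 + y.2 = 0) then pAdd xs ys else
        (x.1, x.2 + y.2) :: pAdd xs ys := rfl

lemma addF_eq (a b : Ply) (kk : Ply → Bool) : addF a b kk = kk (pAdd a b) := by
  induction a generalizing b kk with
  | nil => rfl
  | cons x xs ih =>
    induction b generalizing kk with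
    | nil => rfl
    | cons y ys ih2 =>
      have e : addF (x :: xs) (y :: ys) kk = @Bool.rec (fun _ => Bool)
        (@Bool.rec (fun _ => Bool)
          (frc (x.2 + y.2) fun s => @Bool.rec (fun _ => Bool)
            (addF xs ys fun r => kk ((x.1, s) :: r)) (addF xs ys kk) (decide (s = 0)))
          (addF xs (y :: ys) fun r => kk (x :: r)) (Nat.blt y.1 x.1))
        (addF (x :: xs) ys fun r => kk (y :: r)) (Nat.blt x.1 y.1) := rfl
      rw [e, pAdd_cons, frc_eq, ih, ih, ih, ih2]
      cases Nat.blt x.1 y.1 <;> cases Nat.blt y.1 x.1 <;> cases decide (x.2 + y.2 = 0) <;> rfl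

lemma evP_add {R : Type*} [CommRing R] (v : ℕ →* R) (a b : Ply) :
    evP v (pAdd a b) = evP v a + evP v b := by
  induction a generalizing b with
  | nil => change evP v b = _; rw [evP_nil, zero_add]
  | cons x xs ih =>
    induction b with
    | nil => change evP v (x :: xs) = _; rw [evP_nil, add_zero]
    | cons y ys ih2 =>
      rw [pAdd_cons]
      cases h1 : Nat.blt x.1 y.1
      · cases h2 : Nat.blt y.1 x.1
        · have hxy : x.1 = y.1 := by
            have h3 : ¬ (x.1 < y.1) := fun h => by rw [← Nat.blt_eq, h1] at h; exact Bool.noConfusion h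
            have h4 : ¬ (y.1 < x.1) := fun h => by rw [← Nat.blt_eq, h2] at h; exact Bool.noConfusion h
            omega
          by_cases h3 : x.2 + y.2 = 0
          · have h4 : (x.2 : R) + (y.2 : R) = 0 := by rw [← Int.cast_add, h3, Int.cast_zero]
            simp only [cond_false, decide_eq_true h3, cond_true, ih, evP_cons, hxy]
            linear_combination (-v y.1) * h4
          · simp only [cond_false, decide_eq_false h3, ih, evP_cons, hxy]
            push_cast; ring
        · simp only [cond_false, cond_true, ih, evP_cons]; ring
      · simp only [cond_true, evP_cons, ih2]; ring

def smF (x : ℕ × ℤ) (l : Ply) : (Ply → Bool) → Bool :=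
  @List.rec (ℕ × ℤ) (fun _ => (Ply → Bool) → Bool) (fun kk => kk [])
    (fun y _ ih kk => frcN (Nat.mul x.1 y.1) fun n => frc (Int.mul x.2 y.2) fun s =>
      ih fun r => kk ((n, s) :: r)) l

def pSm (x : ℕ × ℤ) (l : Ply) : Ply := l.map fun y => (x.1 * y.1, x.2 * y.2)

lemma smF_eq (x : ℕ × ℤ) (l : Ply) (kk : Ply → Bool) : smF x l kk = kk (pSm x l) := by
  induction l generalizing kk with
  | nil => rfl
  | cons y l ih =>
    have e : smF x (y :: l) kk = frcN (x.1 * y.1) fun n => frc (x.2 * y.2) fun s =>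
      smF x l fun r => kk ((n, s) :: r) := rfl
    rw [e, frcN_eq, frc_eq, ih]; rfl

lemma evP_sm {R : Type*} [CommRing R] (v : ℕ →* R) (x : ℕ × ℤ) (l : Ply) :
    evP v (pSm x l) = (x.2 : R) * v x.1 * evP v l := by
  induction l with
  | nil => simp [pSm, evP_nil]
  | cons y l ih =>
    have e : pSm x (y :: l) = (x.1 * y.1, x.2 * y.2) :: pSm x l := rfl
    rw [e, evP_cons, ih, evP_cons, map_mul]; push_cast; ring

def mulF (b a : Ply) : Ply → (Ply → Bool) → Bool :=
  @List.rec (ℕ × ℤ) (fun _ => Ply → (Ply → Bool) → Bool) (fun acc kk => kk acc)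
    (fun x _ ih acc kk => smF x b fun s => addF s acc fun r => ih r kk) a

def pMul (b a : Ply) (acc : Ply) : Ply := a.foldl (fun acc x => pAdd (pSm x b) acc) acc

lemma mulF_eq (b a acc : Ply) (kk : Ply → Bool) : mulF b a acc kk = kk (pMul b a acc) := by
  induction a generalizing acc with
  | nil => rfl
  | cons x a ih =>
    have e : mulF b (x :: a) acc kk = smF x b fun s => addF s acc fun r => mulF b a r kk := rfl
    rw [e, smF_eq, addF_eq, ih]; rfl

lemma evP_mul {R : Type*} [CommRing R] (v : ℕ →* R) (b a acc : Ply) :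
    evP v (pMul b a acc) = evP v a * evP v b + evP v acc := by
  induction a generalizing acc with
  | nil => simp [pMul, evP_nil]
  | cons x a ih =>
    have e : pMul b (x :: a) acc = pMul b a (pAdd (pSm x b) acc) := rfl
    rw [e, ih, evP_add, evP_sm, evP_cons]; ring

/-- `x p q + y r s` -/
def lcF (x : ℤ) (p q : Ply) (y : ℤ) (r s : Ply) (kk : Ply → Bool) : Bool :=
  smF (1, x) p fun p => smF (1, y) r fun r => mulF q p [] fun t => mulF s r t kk

def pLc (x : ℤ) (p q : Ply) (y : ℤ) (r s : Ply) : Ply :=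
  pMul s (pSm (1, y) r) (pMul q (pSm (1, x) p) [])

lemma lcF_eq (x : ℤ) (p q : Ply) (y : ℤ) (r s : Ply) (kk : Ply → Bool) :
    lcF x p q y r s kk = kk (pLc x p q y r s) := by
  unfold lcF pLc
  rw [smF_eq, smF_eq, mulF_eq, mulF_eq]

lemma evP_lc {R : Type*} [CommRing R] (v : ℕ →* R) (x : ℤ) (p q : Ply) (y : ℤ) (r s : Ply) :
    evP v (pLc x p q y r s) = x * evP v p * evP v q + y * evP v r * evP v s := by
  unfold pLc
  rw [evP_mul, evP_mul, evP_sm, evP_sm, evP_nil, map_one]; ring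

/-! coefficients of a relation with respect to `J_9`, `J_10` -/

def prs : List ℕ := [2, 3, 5, 7, 11, 13, 17]

def cdl (l : List ℕ) : ℕ := ((l.filter fun i => decide (i < 7)).map fun i => prs.getD i 1).prod

def tl (l : List ℕ) : List ℕ := l.filter fun i => !decide (i < 7)

/-- the coefficient of the monomial `m` in `J_9`, `J_10` -/
def cof (m : List ℕ) (L : List (ℤ × List ℕ)) : Ply :=
  L.foldr (fun t acc => bif decide (tl t.2 = m) then pAdd [(cdl t.2, t.1)] acc else acc) []

def cofF (m : List ℕ) (L : List (ℤ × List ℕ)) : (Ply → Bool) → Bool :=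
  @List.rec (ℤ × List ℕ) (fun _ => (Ply → Bool) → Bool) (fun kk => kk [])
    (fun t _ ih kk => @Bool.rec (fun _ => Bool) (ih kk)
      (frcN (cdl t.2) fun n => ih fun r => addF [(n, t.1)] r kk) (decide (tl t.2 = m))) L

lemma cofF_eq (m : List ℕ) (L : List (ℤ × List ℕ)) (kk : Ply → Bool) :
    cofF m L kk = kk (cof m L) := by
  induction L generalizing kk with
  | nil => rfl
  | cons t L ih =>
    have e : cofF m (t :: L) kk = @Bool.rec (fun _ => Bool) (cofF m L kk)
      (frcN (cdl t.2) fun n => cofF m L fun r => addF [(n, t.1)] r kk) (decide (tl t.2 = m)) := rfl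
    have e' : cof m (t :: L) = bif decide (tl t.2 = m) then pAdd [(cdl t.2, t.1)] (cof m L)
      else cof m L := rfl
    rw [e, e', frcN_eq, ih, ih, addF_eq]
    cases decide (tl t.2 = m) <;> rfl

/-- the monomials in `J_9`, `J_10` that occur -/
def okT (L : List (ℤ × List ℕ)) : Bool := L.all fun t =>
  decide (tl t.2 = []) || decide (tl t.2 = [7]) || decide (tl t.2 = [8]) ||
    decide (tl t.2 = [7, 7]) || decide (tl t.2 = [7, 8])

lemma evR_cof {R : Type*} [CommRing R] (v : ℕ →* R) (J : ℕ → R)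
    (hv : ∀ i < 7, v (prs.getD i 1) = J i) (L : List (ℤ × List ℕ)) (h : okT L = true) :
    evR (ic R) L J = evP v (cof [] L) + evP v (cof [7] L) * J 7 + evP v (cof [8] L) * J 8
      + evP v (cof [7, 7] L) * J 7 ^ 2 + evP v (cof [7, 8] L) * (J 7 * J 8) := by
  have key : ∀ l : List ℕ, (l.map J).prod = v (cdl l) * ((tl l).map J).prod := by
    intro l
    unfold cdl tl
    induction l with
    | nil => simp
    | cons i l ih =>
      rw [List.map_cons, List.prod_cons, ih]
      by_cases hi : i < 7
      · rw [List.filter_cons_of_pos (by simpa using hi), List.filter_cons_of_neg (by simpa using hi),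
          List.map_cons, List.prod_cons, map_mul, hv i hi, mul_assoc]
      · rw [List.filter_cons_of_neg (by simpa using hi), List.filter_cons_of_pos (by simpa using hi),
          List.map_cons, List.prod_cons]
        ring
  induction L with
  | nil => simp [evR, cof, evP_nil]
  | cons t L ih =>
    unfold okT at h ih
    rw [List.all_cons, Bool.and_eq_true] at h
    have e1 : evR (ic R) (t :: L) J = ic R t.1 * (t.2.map J).prod + evR (ic R) L J := by
      simp [evR]
    have e2 : ∀ m, evP v (cof m (t :: L)) = (if tl t.2 = m then (t.1 : R) * v (cdl t.2) else 0)
        + evP v (cof m L) := by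
      intro m
      have e' : cof m (t :: L) = bif decide (tl t.2 = m) then pAdd [(cdl t.2, t.1)] (cof m L)
        else cof m L := rfl
      rw [e']
      by_cases hm : tl t.2 = m
      · rw [decide_eq_true hm, cond_true, evP_add, if_pos hm, evP_cons, evP_nil, add_zero]
      · rw [decide_eq_false hm, cond_false, if_neg hm, zero_add]
    rw [e1, ih h.2, e2, e2, e2, e2, e2, key]
    have h1 := h.1
    simp only [Bool.or_eq_true, decide_eq_true_eq] at h1
    unfold ic
    rcases h1 with (((h1 | h1) | h1) | h1) | h1 <;> rw [h1] <;> simp <;> ring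

/-- the eliminant -/
def detF (kk : Ply → Bool) : Bool :=
  cofF [] rel16 fun a0 => cofF [7] rel16 fun a1 => cofF [8] rel16 fun a2 =>
  cofF [] rel17 fun b0 => cofF [7] rel17 fun b1 => cofF [8] rel17 fun b2 =>
  cofF [] rel18 fun c0 => cofF [7] rel18 fun c1 => cofF [8] rel18 fun c2 =>
  cofF [] rel19 fun d0 => cofF [7] rel19 fun d1 => cofF [8] rel19 fun d2 =>
  lcF (-1620000) b1 c0 2679075000 b2 d0 fun e0 =>
  lcF (-1620000) b1 c1 2679075000 b2 d1 fun e1' =>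
  smF (1, -2679075000 * 1620000) b0 fun b0' => addF b0' e1' fun e1 =>
  lcF (-1620000) b1 c2 2679075000 b2 d2 fun e2 =>
  lcF 1 b1 e2 (-1) b2 e1 fun m0 =>
  lcF 1 b2 e0 (-1) b0 e2 fun m1 =>
  lcF 1 b0 e1 (-1) b1 e0 fun m2 =>
  mulF m0 a0 [] fun t0 => mulF m1 a1 t0 fun t1 => mulF m2 a2 t1 kk

lemma detF_spec : ∃ r : Ply, (∀ kk, detF kk = kk r) ∧
    ∀ {R : Type u} [CommRing R] (v : ℕ →* R) (J : ℕ → R) (hv : ∀ i < 7, v (prs.getD i 1) = J i)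
      (h16 : evR (ic R) rel16 J = 0) (h17 : evR (ic R) rel17 J = 0)
      (h18 : evR (ic R) rel18 J = 0) (h19 : evR (ic R) rel19 J = 0), evP v r = 0 := by
  unfold detF
  simp only [cofF_eq, lcF_eq, smF_eq, addF_eq, mulF_eq]
  refine ⟨_, fun kk => rfl, ?_⟩
  intro R _ v J hv h16 h17 h18 h19
  simp only [evP_mul, evP_lc, evP_add, evP_sm, evP_nil, map_one]
  rw [evR_cof v J hv _ (by decide +kernel)] at h16 h17 h18 h19
  have f1 : cof [7, 7] rel16 = [] := by decide +kernel
  have f2 : cof [7, 8] rel16 = [] := by decide +kernel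
  have f3 : cof [7, 7] rel17 = [] := by decide +kernel
  have f4 : cof [7, 8] rel17 = [] := by decide +kernel
  have f5 : cof [7, 7] rel18 = [(1, -2679075000)] := by decide +kernel
  have f6 : cof [7, 8] rel18 = [] := by decide +kernel
  have f7 : cof [7, 7] rel19 = [] := by decide +kernel
  have f8 : cof [7, 8] rel19 = [(1, 1620000)] := by decide +kernel
  rw [f1, f2, evP_nil] at h16
  rw [f3, f4, evP_nil] at h17
  rw [f5, f6, evP_nil, evP_cons, evP_nil, map_one] at h18
  rw [f7, f8, evP_nil, evP_cons, evP_nil, map_one] at h19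
  push_cast at *
  generalize evP v (cof [] rel16) = a0 at *
  generalize evP v (cof [7] rel16) = a1 at *
  generalize evP v (cof [8] rel16) = a2 at *
  generalize evP v (cof [] rel17) = b0 at *
  generalize evP v (cof [7] rel17) = b1 at *
  generalize evP v (cof [8] rel17) = b2 at *
  generalize evP v (cof [] rel18) = c0 at *
  generalize evP v (cof [7] rel18) = c1 at *
  generalize evP v (cof [8] rel18) = c2 at *
  generalize evP v (cof [] rel19) = d0 at *
  generalize evP v (cof [7] rel19) = d1 at *
  generalize evP v (cof [8] rel19) = d2 at *
  generalize J 7 = y at *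
  generalize J 8 = z at *
  have hE : (-1620000 * b1 * c0 + 2679075000 * b2 * d0)
      + (-4340101500000000 * b0 + (-1620000 * b1 * c1 + 2679075000 * b2 * d1)) * y
      + (-1620000 * b1 * c2 + 2679075000 * b2 * d2) * z = 0 := by
    linear_combination (-4340101500000000 * y) * h17 - 1620000 * b1 * h18 + 2679075000 * b2 * h19
  linear_combination (b1 * (-1620000 * b1 * c2 + 2679075000 * b2 * d2)
      - b2 * (-4340101500000000 * b0 + (-1620000 * b1 * c1 + 2679075000 * b2 * d1))) * h16
    - (a1 * (-1620000 * b1 * c2 + 2679075000 * b2 * d2)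
      - a2 * (-4340101500000000 * b0 + (-1620000 * b1 * c1 + 2679075000 * b2 * d1))) * h17
    + (a1 * b2 - a2 * b1) * hE


/-! ### Reading off the quintic -/

/-- exponent of `p`, by trial division -/
def vp (p : ℕ) : ℕ → ℕ → ℕ :=
  @Nat.rec (fun _ => ℕ → ℕ) (fun _ => 0)
    (fun _ ih n => bif Nat.beq (n % p) 0 then ih (n / p) + 1 else 0)

def xe (n : ℕ) : List ℕ :=
  [vp 2 20 n, vp 3 20 n, vp 5 20 n, vp 7 20 n, vp 11 20 n, vp 13 20 n]

def Kc : List ℤ := [-(2 ^ 5 * 3 ^ 6 * 5 ^ 4), -(2 ^ 7 * 3 ^ 10 * 5 ^ 6), -(2 ^ 6 * 3 ^ 14 * 5 ^ 10),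
  -(2 ^ 8 * 3 ^ 18 * 5 ^ 10), -(2 ^ 7 * 3 ^ 22 * 5 ^ 13), -(2 ^ 7 * 3 ^ 26 * 5 ^ 16)]

def nt (l : List ℕ) (i : ℕ) : ℕ := l.getD i 0

def tOK (t : ℕ × ℤ) : Bool :=
  decide (t.1 = 2 ^ nt (xe t.1) 0 * 3 ^ nt (xe t.1) 1 * 5 ^ nt (xe t.1) 2 * 7 ^ nt (xe t.1) 3
    * 11 ^ nt (xe t.1) 4 * 13 ^ nt (xe t.1) 5 * 17 ^ vp 17 20 t.1) &&
  decide (2 * nt (xe t.1) 0 + 3 * nt (xe t.1) 1 + 4 * nt (xe t.1) 2 + 5 * nt (xe t.1) 3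
    + 6 * nt (xe t.1) 4 + 7 * nt (xe t.1) 5 + 8 * vp 17 20 t.1 = 40) &&
  decide (vp 17 20 t.1 < 6) &&
  decide (Kc.getD (vp 17 20 t.1) 1 * (t.2 / Kc.getD (vp 17 20 t.1) 1) = t.2)

def dat (j : ℕ) (r : Ply) : List (ℤ × List ℕ) :=
  (r.filter fun t => Nat.beq (vp 17 20 t.1) j).map fun t => (t.2 / Kc.getD j 1, xe t.1)

def chk (r : Ply) : Bool :=
  r.all tOK && decide (dat 5 r = [(1, [0, 0, 0, 0, 0, 0])]) &&
  decide (dat 4 r = [(-286875, [0, 0, 2, 0, 0, 0]), (245000, [1, 0, 0, 0, 1, 0]),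
    (-170100, [0, 1, 0, 1, 0, 0]), (514500, [2, 0, 1, 0, 0, 0]), (84672, [1, 2, 0, 0, 0, 0]),
    (-2151296, [4, 0, 0, 0, 0, 0])])

lemma chk_det : detF chk = true := by decide +kernel

def mv (L : List (ℤ × List ℕ)) : MvPolynomial (Fin 6) ℤ :=
  (L.map fun d => C d.1 * ∏ i : Fin 6, X i ^ nt d.2 i).sum

lemma mv_nil : mv [] = 0 := rfl
lemma mv_cons (d : ℤ × List ℕ) (L : List (ℤ × List ℕ)) :
    mv (d :: L) = C d.1 * ∏ i : Fin 6, X i ^ nt d.2 i + mv L := by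
  simp [mv]

lemma dat_cons (j : ℕ) (t : ℕ × ℤ) (r : Ply) : mv (dat j (t :: r)) =
    (if vp 17 20 t.1 = j then C (t.2 / Kc.getD j 1) * ∏ i : Fin 6, X i ^ nt (xe t.1) i else 0)
      + mv (dat j r) := by
  unfold dat
  by_cases h : vp 17 20 t.1 = j
  · rw [List.filter_cons_of_pos (by simpa using h), List.map_cons, mv_cons, if_pos h]
  · rw [List.filter_cons_of_neg (by simpa using h), if_neg h, zero_add]

lemma tOK_all {r : Ply} (h : r.all tOK = true) {t : ℕ × ℤ} (ht : t ∈ r) : tOK t = true :=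
  List.all_eq_true.1 h t ht

lemma mv_hom {r : Ply} (h : r.all tOK = true) (j d : ℕ) (hd : d + 8 * j = 40) :
    (mv (dat j r)).IsWeightedHomogeneous (fun j : Fin 6 => (j : ℕ) + 2) d := by
  induction r with
  | nil => exact isWeightedHomogeneous_zero _ _ _
  | cons t r ih =>
    rw [List.all_cons, Bool.and_eq_true] at h
    rw [dat_cons]
    refine IsWeightedHomogeneous.add ?_ (ih h.2)
    split_ifs with hj
    · have h1 := h.1
      unfold tOK at h1
      simp only [Bool.and_eq_true, decide_eq_true_eq] at h1
      have h2 := h1.1.1.2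
      generalize xe t.1 = l at *
      have h3 : (∏ i : Fin 6, (X i : MvPolynomial (Fin 6) ℤ) ^ nt l i).IsWeightedHomogeneous
          (fun j : Fin 6 => (j : ℕ) + 2) (∑ i : Fin 6, nt l i • ((i : ℕ) + 2)) :=
        IsWeightedHomogeneous.prod Finset.univ _ _ fun i _ =>
          (isWeightedHomogeneous_X ℤ (fun j : Fin 6 => (j : ℕ) + 2) i).pow (nt l i)
      have h4 : 0 + ∑ i : Fin 6, nt l i • ((i : ℕ) + 2) = d := by
        rw [Fin.sum_univ_six]
        simp only [smul_eq_mul, Fin.val_zero, Fin.val_one, Fin.val_two, Fin.coe_ofNat_eq_mod,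
          Nat.reduceMod]
        omega
      rw [← h4]
      exact (isWeightedHomogeneous_C _ _).mul h3
    · exact isWeightedHomogeneous_zero _ _ _

lemma mv_ev {R : Type*} [CommRing R] (v : ℕ →* R) (J : ℕ → R)
    (hv : ∀ i < 7, v (prs.getD i 1) = J i) {r : Ply} (h : r.all tOK = true) :
    ∑ j ∈ Finset.range 6, ((Kc.getD j 1 : ℤ) : R) *
      eval₂ (Int.castRingHom R) (fun i : Fin 6 => J i) (mv (dat j r)) * J 6 ^ j = evP v r := by
  induction r with
  | nil => simp [dat, mv_nil, evP_nil]
  | cons t r ih =>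
    rw [List.all_cons, Bool.and_eq_true] at h
    have h1 := h.1
    unfold tOK at h1
    simp only [Bool.and_eq_true, decide_eq_true_eq] at h1
    obtain ⟨⟨⟨h1, -⟩, h2⟩, h3⟩ := h1
    rw [evP_cons, ← ih h.2]
    simp only [dat_cons, eval₂_add, mul_add, add_mul, Finset.sum_add_distrib]
    congr 1
    rw [Finset.sum_eq_single_of_mem (vp 17 20 t.1) (Finset.mem_range.2 h2)
      (fun b _ hb => by rw [if_neg (Ne.symm hb), eval₂_zero, mul_zero, zero_mul]), if_pos rfl]
    have e : v t.1 = (∏ i : Fin 6, J i ^ nt (xe t.1) i) * J 6 ^ vp 17 20 t.1 := by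
      rw [Fin.prod_univ_six]
      conv_lhs => rw [h1]
      simp only [map_mul, map_pow]
      rw [show v 2 = J 0 from hv 0 (by norm_num), show v 3 = J 1 from hv 1 (by norm_num),
        show v 5 = J 2 from hv 2 (by norm_num), show v 7 = J 3 from hv 3 (by norm_num),
        show v 11 = J 4 from hv 4 (by norm_num), show v 13 = J 5 from hv 5 (by norm_num),
        show v 17 = J 6 from hv 6 (by norm_num)]
      rfl
    have e2 : ((Kc.getD (vp 17 20 t.1) 1 : ℤ) : R) * ((t.2 / Kc.getD (vp 17 20 t.1) 1 : ℤ) : R)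
        = (t.2 : R) := by rw [← Int.cast_mul, h3]
    rw [e, ← e2, eval₂_mul, eval₂_C, eval₂_prod]
    simp only [eval₂_pow, eval₂_X, eq_intCast]
    ring

/-- the multiplicative map with prescribed values on primes -/
def vm {R : Type*} [Field R] (y : ℕ → R) : ℕ →* R where
  toFun n := if n = 0 then 0 else n.factorization.prod fun p e => y p ^ e
  map_one' := by simp
  map_mul' m n := by
    by_cases hm : m = 0
    · simp [hm]
    by_cases hn : n = 0
    · simp [hn]
    rw [if_neg hm, if_neg hn, if_neg (mul_ne_zero hm hn), Nat.factorization_mul hm hn]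
    exact Finsupp.prod_add_index' (fun _ => pow_zero _) (fun _ _ _ => pow_add _ _ _)

lemma vm_prime {R : Type*} [Field R] (y : ℕ → R) {p : ℕ} (hp : p.Prime) : vm y p = y p := by
  change (if p = 0 then 0 else p.factorization.prod fun p e => y p ^ e) = y p
  rw [if_neg hp.ne_zero, hp.factorization, Finsupp.prod_single_index (h := fun p e => y p ^ e) (pow_zero _), pow_one]

lemma vm_prs {R : Type*} [Field R] (J : ℕ → R) :
    ∀ i < 7, vm (fun p => J (prs.idxOf p)) (prs.getD i 1) = J i := by
  intro i hi
  have h : ∀ i < 7, (prs.getD i 1).Prime ∧ prs.idxOf (prs.getD i 1) = i := by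
    intro i hi
    unfold prs
    interval_cases i <;> exact ⟨by norm_num, by decide⟩
  rw [vm_prime _ (h i hi).1, (h i hi).2]

/-- **The degree-5 relation for `J_8`.** There are integer polynomials
`I_8, I_16, I_24, I_32, I_40` in `J_2, ..., J_7` (variables `X 0, ..., X 5` of weights
`2, ..., 7`), weighted-homogeneous of degrees `8, 16, 24, 32, 40` respectively, such that
for every field `k` of characteristic ∉ {2,3,5,7} and every binary octavic over `k` the
stated quintic relation for `J_8` holds; moreover `I_8` is the explicitly given polynomial. -/
theorem J8_quintic_relation :
    ∃ P8 P16 P24 P32 P40 : MvPolynomial (Fin 6) ℤ,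
      P8.IsWeightedHomogeneous (fun j : Fin 6 => (j : ℕ) + 2) 8 ∧
      P16.IsWeightedHomogeneous (fun j : Fin 6 => (j : ℕ) + 2) 16 ∧
      P24.IsWeightedHomogeneous (fun j : Fin 6 => (j : ℕ) + 2) 24 ∧
      P32.IsWeightedHomogeneous (fun j : Fin 6 => (j : ℕ) + 2) 32 ∧
      P40.IsWeightedHomogeneous (fun j : Fin 6 => (j : ℕ) + 2) 40 ∧
      P8 = -(2 ^ 7 * 7 ^ 5 : MvPolynomial (Fin 6) ℤ) * X 0 ^ 4
            + 2 ^ 2 * 3 * 5 ^ 3 * 7 ^ 3 * X 0 ^ 2 * X 2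
            + 2 ^ 6 * 3 ^ 3 * 7 ^ 2 * X 0 * X 1 ^ 2
            + 2 ^ 3 * 5 ^ 4 * 7 ^ 2 * X 0 * X 4
            - 2 ^ 2 * 3 ^ 5 * 5 ^ 2 * 7 * X 1 * X 3
            - 3 ^ 3 * 5 ^ 4 * 17 * X 2 ^ 2 ∧
      ∀ (k : Type u) (_ : Field k), CharOK k → ∀ a : Fin 9 → k,
        (2 ^ 2 * 3 ^ 20 * 5 ^ 12 : k) * J8 a ^ 5
          + (2 ^ 2 * 3 ^ 16 * 5 ^ 9 : k) *
              eval₂ (Int.castRingHom k) (fun j : Fin 6 => Jinv ((j : ℕ) + 2) a) P8 * J8 a ^ 4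
          + (2 ^ 3 * 3 ^ 12 * 5 ^ 6 : k) *
              eval₂ (Int.castRingHom k) (fun j : Fin 6 => Jinv ((j : ℕ) + 2) a) P16 * J8 a ^ 3
          + (2 * 3 ^ 8 * 5 ^ 6 : k) *
              eval₂ (Int.castRingHom k) (fun j : Fin 6 => Jinv ((j : ℕ) + 2) a) P24 * J8 a ^ 2
          + (2 ^ 2 * 3 ^ 4 * 5 ^ 2 : k) *
              eval₂ (Int.castRingHom k) (fun j : Fin 6 => Jinv ((j : ℕ) + 2) a) P32 * J8 a
          + eval₂ (Int.castRingHom k) (fun j : Fin 6 => Jinv ((j : ℕ) + 2) a) P40 = 0 := by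
  obtain ⟨r, hr, hz⟩ := detF_spec.{u}
  have hc : chk r = true := (hr chk).symm.trans chk_det
  unfold chk at hc
  simp only [Bool.and_eq_true, decide_eq_true_eq] at hc
  obtain ⟨⟨h0, h5⟩, h4⟩ := hc
  have e5 : mv (dat 5 r) = 1 := by
    rw [h5, mv_cons, mv_nil, Fin.prod_univ_six]; simp [nt]
  refine ⟨mv (dat 4 r), mv (dat 3 r), mv (dat 2 r), mv (dat 1 r), mv (dat 0 r),
    mv_hom h0 _ _ rfl, mv_hom h0 _ _ rfl, mv_hom h0 _ _ rfl, mv_hom h0 _ _ rfl,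
    mv_hom h0 _ _ rfl, ?_, ?_⟩
  · rw [h4]
    simp only [mv_cons, mv_nil, Fin.prod_univ_six]
    simp [nt]
    ring
  · intro k _ hk a
    have H := hk.good
    have hs := hz (vm fun p => Jx a (prs.idxOf p)) (Jx a) (vm_prs (Jx a)) (rt16 H a) (rt17 H a)
      (rt18 H a) (rt19 H a)
    rw [← mv_ev _ (Jx a) (vm_prs (Jx a)) h0] at hs
    simp only [Finset.sum_range_succ, Finset.sum_range_zero, e5, eval₂_one] at hs
    have e6 : Jx a 6 = J8 a := rfl
    have eJ : (fun i : Fin 6 => Jx a i) = fun j : Fin 6 => Jinv ((j : ℕ) + 2) a := rfl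
    rw [e6, eJ] at hs
    generalize eval₂ (Int.castRingHom k) (fun j : Fin 6 => Jinv ((j : ℕ) + 2) a) (mv (dat 4 r)) = x4
      at *
    generalize eval₂ (Int.castRingHom k) (fun j : Fin 6 => Jinv ((j : ℕ) + 2) a) (mv (dat 3 r)) = x3
      at *
    generalize eval₂ (Int.castRingHom k) (fun j : Fin 6 => Jinv ((j : ℕ) + 2) a) (mv (dat 2 r)) = x2
      at *
    generalize eval₂ (Int.castRingHom k) (fun j : Fin 6 => Jinv ((j : ℕ) + 2) a) (mv (dat 1 r)) = x1
      at *
    generalize eval₂ (Int.castRingHom k) (fun j : Fin 6 => Jinv ((j : ℕ) + 2) a) (mv (dat 0 r)) = x0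
      at *
    generalize J8 a = z at *
    have hn : ((14580000 : ℕ) : k) ≠ 0 := H.ne 5 6 4 0 (by norm_num)
    refine (mul_eq_zero.1 (?_ : ((14580000 : ℕ) : k) * _ = 0)).resolve_left hn
    simp only [Kc, List.getD_cons_zero, List.getD_cons_succ] at hs
    push_cast at hs ⊢
    linear_combination -hs

end
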